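/- arXiv:2010.03353 — 2 statements merged into one kernel-verified Lean document; each statement's English description precedes it below -/
import Mathlib

section
/- Let 𝔸 be a first-order homogeneous differential operator of the form 𝔸u = Σⱼ 𝔸ⱼ∂ⱼu on ℝ³ that fails to be elliptic. Then for every 1 ≤ p < ∞ there exists a sequence ψ_k ∈ C_c^∞(ℝ³; ℝ³) such that sup_k ‖𝔸ψ_k‖_{Lᵖ(ℝ³)} < ∞ but ‖Dψ_k‖_{Lᵖ(ℝ³)} → ∞. -/
/-!
Let `ξ`, `v` be a direction and an amplitude on which the symbol of the operator vanishes. For a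
field `ρ(x) η(⟨x, ξ⟩) v` the operator only sees the derivatives falling on the cutoff `ρ`, so it
stays bounded as long as `η` does, whereas the full gradient contains the term `ρ η'(⟨x, ξ⟩) v ⊗ ξ`.
Taking `η(t) = sin (k t + θ)` makes this term of order `k`, with no need to evaluate oscillating
integrals: since `1 ≤ |cos t| + |cos (t + π / 2)|`, at least one of the phases `θ = 0` and
`θ = π / 2` leaves a fixed fraction of the `Lᵖ` mass of the region where `ρ = 1`.
-/

open MeasureTheory Filter
open scoped ENNReal

noncomputable def pd (j : Fin 3) (f : (Fin 3 → ℝ) → ℝ) (x : Fin 3 → ℝ) : ℝ :=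
  fderiv ℝ f x (Pi.single j 1)

/-- The Jacobian matrix `Du` of a vector field `u : ℝ³ → ℝ³`. -/
noncomputable def jac (u : (Fin 3 → ℝ) → (Fin 3 → ℝ)) (x : Fin 3 → ℝ) :
    Fin 3 → Fin 3 → ℝ :=
  fun i j => pd j (fun y => u y i) x

/-- The operator `𝔸u = Σⱼ 𝔸ⱼ ∂ⱼu`. -/
noncomputable def Aop {N : ℕ} (A : Fin 3 → (Fin 3 → ℝ) →ₗ[ℝ] (Fin N → ℝ))
    (u : (Fin 3 → ℝ) → (Fin 3 → ℝ)) (x : Fin 3 → ℝ) : Fin N → ℝ :=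
  ∑ j, A j (fun i => pd j (fun y => u y i) x)

open scoped ContDiff Topology

lemma tendsto_nhds_top_of_natCast_mul_le_mul {u : ℕ → ℝ≥0∞} {c C : ℝ≥0∞} (hc : c ≠ 0)
    (hC : C ≠ ⊤) (h : ∀ k : ℕ, k * c ≤ C * u k) : Tendsto u atTop (𝓝 ⊤) := by
  have tendsto_mul : Tendsto (fun k : ℕ => (k : ℝ≥0∞) * c) atTop (𝓝 ⊤) := by
    simpa only [ENNReal.top_mul hc] using
      ENNReal.Tendsto.mul_const (b := c) ENNReal.tendsto_nat_nhds_top (Or.inl ENNReal.top_ne_zero)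
  have tendsto_div : Tendsto (fun k : ℕ => (k : ℝ≥0∞) * c / C) atTop (𝓝 ⊤) := by
    simpa only [ENNReal.top_div_of_ne_top hC] using
      ENNReal.Tendsto.div_const (b := C) tendsto_mul (Or.inl ENNReal.top_ne_zero)
  exact tendsto_nhds_top_mono' tendsto_div fun k => ENNReal.div_le_of_le_mul' (h k)

lemma eLpNorm_const_ne_zero {α E : Type*} [MeasurableSpace α] [NormedAddCommGroup E]
    {μ : Measure α} (hμ : μ ≠ 0) {q : ℝ≥0∞} (hq : q ≠ 0) {c : E} (hc : c ≠ 0) :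
    eLpNorm (fun _ : α => c) q μ ≠ 0 := by
  rw [eLpNorm_const c hq hμ]
  simp [hc, hμ, ENNReal.rpow_eq_zero_iff]

lemma one_le_abs_cos_add_abs_cos_add_pi_div_two (t : ℝ) :
    1 ≤ |Real.cos t| + |Real.cos (t + Real.pi / 2)| := by
  rw [Real.cos_add_pi_div_two, abs_neg]
  have pythagoras : |Real.sin t| ^ 2 + |Real.cos t| ^ 2 = 1 := by
    rw [sq_abs, sq_abs, Real.sin_sq_add_cos_sq]
  nlinarith [abs_nonneg (Real.sin t), abs_nonneg (Real.cos t)]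

lemma exists_eLpNorm_one_le_eLpNorm_cos_add {α : Type*} [MeasurableSpace α] {μ : Measure α}
    {f : α → ℝ} (hf : AEStronglyMeasurable f μ) (q : ℝ≥0∞) :
    ∃ θ : ℝ, eLpNorm (fun _ : α => (1 : ℝ)) q μ ≤
      ENNReal.LpAddConst q * 2 * eLpNorm (fun x => Real.cos (f x + θ)) q μ := by
  let g : ℝ → α → ℝ := fun θ x => ‖Real.cos (f x + θ)‖
  have hg (θ : ℝ) : AEStronglyMeasurable (g θ) μ :=
    (Real.continuous_cos.comp_aestronglyMeasurable (hf.add aestronglyMeasurable_const)).norm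
  have sum_le : eLpNorm (fun _ : α => (1 : ℝ)) q μ ≤
      ENNReal.LpAddConst q * (eLpNorm (g 0) q μ + eLpNorm (g (Real.pi / 2)) q μ) := by
    refine le_trans (eLpNorm_mono fun x => ?_) (eLpNorm_add_le' (hg 0) (hg (Real.pi / 2)) q)
    rw [norm_one]
    refine le_trans ?_ (Real.le_norm_self _)
    simpa [g] using one_le_abs_cos_add_abs_cos_add_pi_div_two (f x)
  suffices ∃ θ, eLpNorm (g 0) q μ + eLpNorm (g (Real.pi / 2)) q μ ≤ 2 * eLpNorm (g θ) q μ by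
    obtain ⟨θ, hθ⟩ := this
    refine ⟨θ, sum_le.trans ?_⟩
    rw [mul_assoc, ← eLpNorm_norm fun x => Real.cos (f x + θ)]
    gcongr
  rcases le_total (eLpNorm (g 0) q μ) (eLpNorm (g (Real.pi / 2)) q μ) with h | h
  · exact ⟨Real.pi / 2, by rw [two_mul]; gcongr⟩
  · exact ⟨0, by rw [two_mul]; gcongr⟩

section WavePacket

variable {E F G : Type*} [NormedAddCommGroup E] [NormedSpace ℝ E]
  [NormedAddCommGroup F] [NormedSpace ℝ F] [NormedAddCommGroup G] [NormedSpace ℝ G]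
  {ρ : E → ℝ} {ℓ : E →L[ℝ] ℝ} {v : F} {η : ℝ → ℝ}

/-- The plane wave `x ↦ η(ℓ x) v` localised by the cutoff `ρ`. With `ℓ = ⟨·, ξ⟩` these are the
fields `ψ = ρ η(⟨·, ξ⟩) v` witnessing the failure of ellipticity in the direction `ξ`. -/
def wavePacket (ρ : E → ℝ) (ℓ : E →L[ℝ] ℝ) (v : F) (η : ℝ → ℝ) (x : E) : F :=
  (ρ x * η (ℓ x)) • v

lemma contDiff_wavePacket {n : WithTop ℕ∞} (hρ : ContDiff ℝ n ρ) (hη : ContDiff ℝ n η) :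
    ContDiff ℝ n (wavePacket ρ ℓ v η) :=
  (hρ.mul (hη.comp ℓ.contDiff)).smul contDiff_const

lemma hasCompactSupport_wavePacket (hρ : HasCompactSupport ρ) :
    HasCompactSupport (wavePacket ρ ℓ v η) :=
  (HasCompactSupport.mul_right hρ).smul_right

lemma fderiv_wavePacket {x : E} (hρ : DifferentiableAt ℝ ρ x)
    (hη : DifferentiableAt ℝ η (ℓ x)) :
    fderiv ℝ (wavePacket ρ ℓ v η) x =
      η (ℓ x) • (fderiv ℝ ρ x).smulRight v + (ρ x * deriv η (ℓ x)) • ℓ.smulRight v := by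
  have hηℓ : HasFDerivAt (fun y => η (ℓ y)) (deriv η (ℓ x) • ℓ) x :=
    hη.hasDerivAt.comp_hasFDerivAt x ℓ.hasFDerivAt
  refine ((hρ.hasFDerivAt.mul hηℓ).smul_const v).fderiv.trans ?_
  ext y
  simp only [ContinuousLinearMap.smulRight_apply, add_apply, smul_apply, smul_eq_mul]
  module

lemma map_fderiv_wavePacket_of_map_smulRight_eq_zero {L : (E →L[ℝ] F) →L[ℝ] G}
    (hL : L (ℓ.smulRight v) = 0) {x : E} (hρ : DifferentiableAt ℝ ρ x)
    (hη : DifferentiableAt ℝ η (ℓ x)) :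
    L (fderiv ℝ (wavePacket ρ ℓ v η) x) = η (ℓ x) • L ((fderiv ℝ ρ x).smulRight v) := by
  rw [fderiv_wavePacket hρ hη, map_add, map_smul, map_smul, hL, smul_zero, add_zero]

lemma fderiv_wavePacket_of_eventuallyEq_one {x : E} (hρ : ρ =ᶠ[𝓝 x] 1)
    (hη : DifferentiableAt ℝ η (ℓ x)) :
    fderiv ℝ (wavePacket ρ ℓ v η) x = deriv η (ℓ x) • ℓ.smulRight v := by
  have hρd : HasFDerivAt ρ (0 : E →L[ℝ] ℝ) x := (hasFDerivAt_const 1 x).congr_of_eventuallyEq hρ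
  rw [fderiv_wavePacket hρd.differentiableAt hη, hρd.fderiv, hρ.eq_of_nhds]
  ext y
  simp

variable [MeasurableSpace E] {μ : Measure E} {q : ℝ≥0∞}

lemma memLp_map_smulRight_fderiv [OpensMeasurableSpace E] [IsFiniteMeasureOnCompacts μ]
    (L : (E →L[ℝ] F) →L[ℝ] G) (v : F) (hρ : ContDiff ℝ 1 ρ) (hρ_supp : HasCompactSupport ρ) :
    MemLp (fun x => L ((fderiv ℝ ρ x).smulRight v)) q μ := by
  let T : (E →L[ℝ] ℝ) →L[ℝ] G := L ∘L (ContinuousLinearMap.smulRightL ℝ E F).flip v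
  exact (T.continuous.comp (hρ.continuous_fderiv one_ne_zero)).memLp_of_hasCompactSupport
    ((hρ_supp.fderiv (𝕜 := ℝ)).comp_left (map_zero T))

lemma eLpNorm_map_fderiv_wavePacket_le {L : (E →L[ℝ] F) →L[ℝ] G}
    (hL : L (ℓ.smulRight v) = 0) (hρ : Differentiable ℝ ρ) (hη : Differentiable ℝ η) {C : ℝ}
    (hC : ∀ t, |η t| ≤ C) :
    eLpNorm (fun x => L (fderiv ℝ (wavePacket ρ ℓ v η) x)) q μ ≤
      ENNReal.ofReal C * eLpNorm (fun x => L ((fderiv ℝ ρ x).smulRight v)) q μ := by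
  refine eLpNorm_le_mul_eLpNorm_of_ae_le_mul (.of_forall fun x => ?_) q
  rw [map_fderiv_wavePacket_of_map_smulRight_eq_zero hL (hρ x) (hη (ℓ x)), norm_smul]
  gcongr
  exact hC (ℓ x)

lemma le_eLpNorm_map_fderiv_wavePacket (M : (E →L[ℝ] F) →L[ℝ] G) {s : Set E}
    (hs : MeasurableSet s) (hρ : ∀ x ∈ s, ρ =ᶠ[𝓝 x] 1) (hη : Differentiable ℝ η) :
    ‖M (ℓ.smulRight v)‖ₑ * eLpNorm (fun x => deriv η (ℓ x)) q (μ.restrict s) ≤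
      eLpNorm (fun x => M (fderiv ℝ (wavePacket ρ ℓ v η) x)) q μ := by
  rw [← enorm_norm, ← eLpNorm_const_smul]
  refine le_trans (eLpNorm_mono_ae ?_) (eLpNorm_mono_measure _ Measure.restrict_le_self)
  filter_upwards [ae_restrict_mem hs] with x hx
  rw [fderiv_wavePacket_of_eventuallyEq_one (hρ x hx) (hη (ℓ x)), map_smul, norm_smul,
    Pi.smul_apply, norm_smul, norm_norm, mul_comm]

lemma deriv_sin_mul_add (k θ t : ℝ) :
    deriv (fun t => Real.sin (k * t + θ)) t = k * Real.cos (k * t + θ) := by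
  have h : HasDerivAt (fun t => k * t + θ) k t := by
    simpa using ((hasDerivAt_id t).const_mul k).add_const θ
  rw [h.sin.deriv, mul_comm]

lemma exists_phase_le_eLpNorm_map_fderiv_wavePacket [OpensMeasurableSpace E]
    (M : (E →L[ℝ] F) →L[ℝ] G) {s : Set E} (hs : MeasurableSet s)
    (hρ : ∀ x ∈ s, ρ =ᶠ[𝓝 x] 1) (k : ℝ) :
    ∃ θ : ℝ, ‖k‖ₑ * (‖M (ℓ.smulRight v)‖ₑ * eLpNorm (fun _ : E => (1 : ℝ)) q (μ.restrict s)) ≤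
      ENNReal.LpAddConst q * 2 * eLpNorm
        (fun x => M (fderiv ℝ (wavePacket ρ ℓ v fun t => Real.sin (k * t + θ)) x)) q μ := by
  obtain ⟨θ, hθ⟩ := exists_eLpNorm_one_le_eLpNorm_cos_add
    (ℓ.continuous.const_mul k).aestronglyMeasurable q (μ := μ.restrict s)
  refine ⟨θ, ?_⟩
  have deriv_eq : (fun x => deriv (fun t => Real.sin (k * t + θ)) (ℓ x)) =
      k • fun x => Real.cos (k * ℓ x + θ) :=
    funext fun x => deriv_sin_mul_add k θ (ℓ x)
  have lower := le_eLpNorm_map_fderiv_wavePacket (v := v) (ℓ := ℓ) (μ := μ) (q := q) M hs hρ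
    (show Differentiable ℝ fun t => Real.sin (k * t + θ) by fun_prop)
  rw [deriv_eq, eLpNorm_const_smul] at lower
  calc ‖k‖ₑ * (‖M (ℓ.smulRight v)‖ₑ * eLpNorm (fun _ : E => (1 : ℝ)) q (μ.restrict s))
      ≤ ‖k‖ₑ * (‖M (ℓ.smulRight v)‖ₑ * (ENNReal.LpAddConst q * 2 *
          eLpNorm (fun x => Real.cos (k * ℓ x + θ)) q (μ.restrict s))) := by gcongr
    _ = ENNReal.LpAddConst q * 2 * (‖M (ℓ.smulRight v)‖ₑ *
          (‖k‖ₑ * eLpNorm (fun x => Real.cos (k * ℓ x + θ)) q (μ.restrict s))) := by ring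
    _ ≤ _ := by gcongr

end WavePacket

/-- `L (ℓ.smulRight v)` is the symbol of the operator `u ↦ L (Du)` at the covector `ℓ`, applied to
the vector `v`; with `M` the identity, the second operator is the full derivative. -/
theorem nonelliptic_gives_concentration_general {E F G H : Type*}
    [NormedAddCommGroup E] [NormedSpace ℝ E] [FiniteDimensional ℝ E]
    [MeasurableSpace E] [OpensMeasurableSpace E]
    [NormedAddCommGroup F] [NormedSpace ℝ F] [NormedAddCommGroup G] [NormedSpace ℝ G]
    [NormedAddCommGroup H] [NormedSpace ℝ H]
    (μ : Measure E) [IsFiniteMeasureOnCompacts μ] [μ.IsOpenPosMeasure]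
    {L : (E →L[ℝ] F) →L[ℝ] G} {M : (E →L[ℝ] F) →L[ℝ] H} {ℓ : E →L[ℝ] ℝ} {v : F}
    (hL : L (ℓ.smulRight v) = 0) (hM : M (ℓ.smulRight v) ≠ 0) {q : ℝ≥0∞} (hq : q ≠ 0) :
    ∃ ψ : ℕ → E → F,
      (∀ k, ContDiff ℝ ∞ (ψ k) ∧ HasCompactSupport (ψ k)) ∧
      (∃ C : ℝ≥0∞, C < ⊤ ∧ ∀ k, eLpNorm (fun x => L (fderiv ℝ (ψ k) x)) q μ ≤ C) ∧
      Tendsto (fun k => eLpNorm (fun x => M (fderiv ℝ (ψ k) x)) q μ) atTop (𝓝 ⊤) := by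
  let ρ : ContDiffBump (0 : E) := ⟨1, 2, one_pos, one_lt_two⟩
  let B : Set E := Metric.ball 0 1
  have hρB : ∀ x ∈ B, ρ =ᶠ[𝓝 x] 1 := fun _ => ρ.eventuallyEq_one_of_mem_ball
  choose θ hθ using fun k : ℕ => exists_phase_le_eLpNorm_map_fderiv_wavePacket
    (ℓ := ℓ) (v := v) (μ := μ) (q := q) M Metric.isOpen_ball.measurableSet hρB k
  refine ⟨fun k => wavePacket ρ ℓ v fun t => Real.sin (k * t + θ k), fun k =>
    ⟨contDiff_wavePacket ρ.contDiff (by fun_prop), hasCompactSupport_wavePacket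
      ρ.hasCompactSupport⟩,
    ⟨eLpNorm (fun x => L ((fderiv ℝ ρ x).smulRight v)) q μ, ?_, fun k => ?_⟩, ?_⟩
  · exact (memLp_map_smulRight_fderiv L v ρ.contDiff ρ.hasCompactSupport).eLpNorm_lt_top
  · simpa using eLpNorm_map_fderiv_wavePacket_le (μ := μ) (q := q) hL
      (ρ.contDiff.differentiable one_ne_zero)
      (show Differentiable ℝ fun t => Real.sin (k * t + θ k) by fun_prop)
      fun t => Real.abs_sin_le_one _
  · have mass_ne_zero : eLpNorm (fun _ : E => (1 : ℝ)) q (μ.restrict B) ≠ 0 :=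
      eLpNorm_const_ne_zero
        (Measure.restrict_eq_zero.not.2 (Metric.measure_ball_pos μ 0 one_pos).ne') hq one_ne_zero
    have const_ne_top : ENNReal.LpAddConst q * 2 ≠ ⊤ :=
      ENNReal.mul_ne_top (ENNReal.LpAddConst_lt_top q).ne ENNReal.ofNat_ne_top
    refine tendsto_nhds_top_of_natCast_mul_le_mul
      (mul_ne_zero (enorm_ne_zero.2 hM) mass_ne_zero) const_ne_top fun k => ?_
    simpa using hθ k

section Coordinates

variable {ι κ V W : Type*} [Fintype ι] [DecidableEq ι]
  [NormedAddCommGroup V] [NormedSpace ℝ V] [FiniteDimensional ℝ V]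
  [NormedAddCommGroup W] [NormedSpace ℝ W]

/-- The map `D ↦ Σⱼ 𝔸ⱼ (D eⱼ)` through which the first-order operator `𝔸u = Σⱼ 𝔸ⱼ ∂ⱼu` acts on the
derivative of `u`; its value at `v ⊗ ξ` is the symbol `𝔸[ξ]v`. -/
noncomputable def derivSymbol (A : ι → V →ₗ[ℝ] W) : ((ι → ℝ) →L[ℝ] V) →L[ℝ] W :=
  ∑ j, (A j).toContinuousLinearMap ∘L ContinuousLinearMap.apply ℝ V (Pi.single j 1)

lemma derivSymbol_apply (A : ι → V →ₗ[ℝ] W) (D : (ι → ℝ) →L[ℝ] V) :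
    derivSymbol A D = ∑ j, A j (D (Pi.single j 1)) := by
  simp [derivSymbol]

lemma derivSymbol_smulRight (A : ι → V →ₗ[ℝ] W) (ℓ : (ι → ℝ) →L[ℝ] ℝ) (v : V) :
    derivSymbol A (ℓ.smulRight v) = ∑ j, ℓ (Pi.single j 1) • A j v := by
  simp only [derivSymbol_apply, ContinuousLinearMap.smulRight_apply, map_smul]

/-- The matrix of a linear map in the standard bases, as a continuous linear function of the map,
for the entrywise supremum norm. -/
noncomputable def matrixCLM [Fintype κ] : ((ι → ℝ) →L[ℝ] (κ → ℝ)) →L[ℝ] (κ → ι → ℝ) :=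
  ContinuousLinearMap.pi fun i => ContinuousLinearMap.pi fun j =>
    ContinuousLinearMap.proj i ∘L ContinuousLinearMap.apply ℝ (κ → ℝ) (Pi.single j 1)

lemma matrixCLM_apply [Fintype κ] (D : (ι → ℝ) →L[ℝ] (κ → ℝ)) (i : κ) (j : ι) :
    matrixCLM D i j = D (Pi.single j 1) i :=
  rfl

lemma matrixCLM_smulRight_apply [Fintype κ] (ℓ : (ι → ℝ) →L[ℝ] ℝ) (v : κ → ℝ) (i : κ)
    (j : ι) :
    matrixCLM (ℓ.smulRight v) i j = ℓ (Pi.single j 1) * v i := by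
  rw [matrixCLM_apply, ContinuousLinearMap.smulRight_apply, Pi.smul_apply, smul_eq_mul]

end Coordinates

lemma pd_apply_eq_fderiv {u : (Fin 3 → ℝ) → (Fin 3 → ℝ)} {x : Fin 3 → ℝ}
    (hu : DifferentiableAt ℝ u x) (i j : Fin 3) :
    pd j (fun y => u y i) x = fderiv ℝ u x (Pi.single j 1) i := by
  rw [pd, (hasFDerivAt_pi'.1 hu.hasFDerivAt i).fderiv]
  rfl

lemma jac_eq_matrixCLM_fderiv {u : (Fin 3 → ℝ) → (Fin 3 → ℝ)} (hu : Differentiable ℝ u) :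
    jac u = fun x => matrixCLM (fderiv ℝ u x) := by
  ext x i j
  rw [jac, pd_apply_eq_fderiv (hu x), matrixCLM_apply]

lemma Aop_eq_derivSymbol_fderiv {N : ℕ} (A : Fin 3 → (Fin 3 → ℝ) →ₗ[ℝ] (Fin N → ℝ))
    {u : (Fin 3 → ℝ) → (Fin 3 → ℝ)} (hu : Differentiable ℝ u) :
    Aop A u = fun x => derivSymbol A (fderiv ℝ u x) := by
  ext1 x
  simp only [Aop, derivSymbol_apply, pd_apply_eq_fderiv (hu x)]

/-- If the first-order homogeneous operator `𝔸u = Σⱼ 𝔸ⱼ ∂ⱼu` on `ℝ³` fails to be elliptic,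
then for every `1 ≤ p < ∞` there is a sequence `ψ_k ∈ C_c^∞(ℝ³;ℝ³)` with
`sup_k ‖𝔸ψ_k‖_{Lᵖ} < ∞` but `‖Dψ_k‖_{Lᵖ} → ∞`. -/
theorem nonelliptic_gives_concentration (N : ℕ)
    (A : Fin 3 → (Fin 3 → ℝ) →ₗ[ℝ] (Fin N → ℝ))
    (hne : ∃ ξ : Fin 3 → ℝ, ξ ≠ 0 ∧ ∃ v : Fin 3 → ℝ, v ≠ 0 ∧ ∑ j, ξ j • A j v = 0)
    (p : ℝ) (hp : 1 ≤ p) :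
    ∃ ψ : ℕ → (Fin 3 → ℝ) → (Fin 3 → ℝ),
      (∀ k, ContDiff ℝ (⊤ : ℕ∞) (ψ k) ∧ HasCompactSupport (ψ k)) ∧
      (∃ C : ℝ≥0∞, C < ⊤ ∧
        ∀ k, eLpNorm (fun x => Aop A (ψ k) x) (ENNReal.ofReal p) volume ≤ C) ∧
      Tendsto (fun k => eLpNorm (fun x => jac (ψ k) x) (ENNReal.ofReal p) volume)
        atTop (nhds ⊤) := by
  obtain ⟨ξ, hξ, v, hv, hξv⟩ := hne
  obtain ⟨j, hj⟩ := Function.ne_iff.1 hξ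
  obtain ⟨i, hi⟩ := Function.ne_iff.1 hv
  let ℓ : (Fin 3 → ℝ) →L[ℝ] ℝ := (dotProductBilin ℝ ℝ ξ).toContinuousLinearMap
  have hℓ (m : Fin 3) : ℓ (Pi.single m 1) = ξ m := dotProduct_single_one ξ m
  have symbol_eq_zero : derivSymbol A (ℓ.smulRight v) = 0 := by
    simpa only [derivSymbol_smulRight, hℓ] using hξv
  have matrix_ne_zero : matrixCLM (ℓ.smulRight v) ≠ 0 := fun h => mul_ne_zero hj hi <| by
    simpa only [matrixCLM_smulRight_apply, hℓ, Pi.zero_apply] using congrFun₂ h i j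
  obtain ⟨ψ, hψ, hbounded, hblowup⟩ := nonelliptic_gives_concentration_general volume
    symbol_eq_zero matrix_ne_zero (q := ENNReal.ofReal p) (by simp; linarith)
  have hψd (k : ℕ) : Differentiable ℝ (ψ k) := (hψ k).1.differentiable (by simp)
  refine ⟨ψ, hψ, ?_, ?_⟩
  · simpa only [Aop_eq_derivSymbol_fderiv A (hψd _)] using hbounded
  · simpa only [jac_eq_matrixCLM_fderiv (hψd _)] using hblowup
end

section
/- (Localized Bourgain–Brezis estimate) There exists a constant c = c(n) > 0 such that for every Φ ∈ C(closure of (0,1)ⁿ; ℝⁿ) ∩ C¹((0,1)ⁿ; ℝⁿ) with div(Φ) = 0 in (0,1)ⁿ, and for every φ ∈ C_c^∞((0,1)ⁿ; ℝⁿ), one has ∫_{(0,1)ⁿ} ⟨Φ, φ⟩ dx ≤ c ‖Φ‖_{L¹((0,1)ⁿ)} ‖∇φ‖_{Lⁿ((0,1)ⁿ)}. -/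
open MeasureTheory
open scoped ENNReal

noncomputable def pdn {n : ℕ} (j : Fin n) (f : (Fin n → ℝ) → ℝ) (x : Fin n → ℝ) : ℝ :=
  fderiv ℝ f x (Pi.single j 1)

/-- The Jacobian `∇φ` of a vector field on `ℝⁿ`. -/
noncomputable def jacn {n : ℕ} (φ : (Fin n → ℝ) → (Fin n → ℝ)) (x : Fin n → ℝ) :
    Fin n → Fin n → ℝ :=
  fun i j => pdn j (fun y => φ y i) x

/-- The open unit cube `(0,1)ⁿ`. -/
def unitCube (n : ℕ) : Set (Fin n → ℝ) := {x | ∀ j, x j ∈ Set.Ioo (0 : ℝ) 1}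

/-!
Fix a direction `i` and slice the cube perpendicularly to it. On the slice at height `t`, replace
the component `u = φ i` by its mean over dilations of size `ε`. Since `n` exceeds the dimension
`n - 1` of the slice, Morrey's argument bounds the error by `ε ^ (1 / n)` and the gradient of the
mean by `ε ^ (1 / n - 1)`, both times the `Lⁿ` norm of `∇u` on the slice. As `Φ` is solenoidal, its
flux through any slice, weighted by a compactly supported `ψ`, is at most `‖ψ‖_∞ + ‖∇ψ‖_∞` times
`‖Φ‖₁`; this controls the smooth part, while the error is controlled by the mass of `Φ` on the
slice. Optimising in `ε` and applying Hölder's inequality in `t` gives the estimate.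
-/

open Set Module
open scoped NNReal

section Dilation

variable {E F : Type*} [NormedAddCommGroup E] [NormedSpace ℝ E] [NormedAddCommGroup F]

lemma hasFDerivAt_add_smul_sub (ε : ℝ) (x z : E) :
    HasFDerivAt (fun y => y + ε • (y - z)) ((1 + ε) • ContinuousLinearMap.id ℝ E) x := by
  rw [add_smul, one_smul]
  exact (hasFDerivAt_id x).add (((hasFDerivAt_id x).sub_const z).const_smul ε)

lemma hasDerivAt_add_smul_sub (x z : E) (ε : ℝ) :
    HasDerivAt (fun e : ℝ => x + e • (x - z)) (x - z) ε := by
  simpa using ((hasDerivAt_id ε).smul_const (x - z)).const_add x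

variable [FiniteDimensional ℝ E] [MeasurableSpace E] [BorelSpace E] {μ : Measure E}
  [μ.IsAddHaarMeasure]

lemma integrable_comp_add_smul_sub {f : E → F} (hf : Integrable f μ) (x : E) {ε : ℝ}
    (hε : 0 < ε) : Integrable (fun z => f (x + ε • (x - z))) μ :=
  ((hf.comp_add_left x).comp_smul hε.ne').comp_sub_left x

lemma integral_comp_add_smul_sub [NormedSpace ℝ F] (f : E → F) (x : E) {ε : ℝ} (hε : 0 < ε) :
    ∫ z, f (x + ε • (x - z)) ∂μ = (ε ^ finrank ℝ E)⁻¹ • ∫ y, f y ∂μ := by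
  rw [integral_sub_left_eq_self (fun w => f (x + ε • w)) μ x,
    Measure.integral_comp_smul μ (fun w => f (x + w)) ε, integral_add_left_eq_self f x,
    abs_of_pos (by positivity)]

lemma setIntegral_comp_add_smul_sub_le {K : Set E} (hK : μ K = 1) {M : E → ℝ} {p : ℝ}
    (hp : 1 ≤ p) (hM0 : ∀ y, 0 ≤ M y) (hM : Integrable (fun y => M y ^ p) μ) (x : E) {ε : ℝ}
    (hε : 0 < ε) :
    ∫ z in K, M (x + ε • (x - z)) ∂μ ≤
      ε ^ (-(finrank ℝ E / p)) * (∫ y, M y ^ p ∂μ) ^ p⁻¹ := by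
  have : IsProbabilityMeasure (μ.restrict K) := ⟨by rw [Measure.restrict_apply_univ, hK]⟩
  have hp0 : 0 < p := by linarith
  have hnorm : 0 ≤ ∫ y, M y ^ p ∂μ := integral_nonneg fun y => Real.rpow_nonneg (hM0 y) p
  by_cases hMi : IntegrableOn (fun z => M (x + ε • (x - z))) K μ
  swap
  · rw [integral_undef hMi]
    positivity
  have hMp := integrable_comp_add_smul_sub hM x hε
  have jensen : (∫ z in K, M (x + ε • (x - z)) ∂μ) ^ p ≤
      (ε ^ finrank ℝ E)⁻¹ * ∫ y, M y ^ p ∂μ :=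
    calc (∫ z in K, M (x + ε • (x - z)) ∂μ) ^ p
      _ ≤ ∫ z in K, M (x + ε • (x - z)) ^ p ∂μ :=
        (convexOn_rpow hp).map_integral_le (Real.continuous_rpow_const hp0.le).continuousOn
          isClosed_Ici (.of_forall fun z => hM0 _) hMi hMp.integrableOn
      _ ≤ ∫ z, M (x + ε • (x - z)) ^ p ∂μ :=
        setIntegral_le_integral hMp (.of_forall fun z => Real.rpow_nonneg (hM0 _) p)
      _ = (ε ^ finrank ℝ E)⁻¹ * ∫ y, M y ^ p ∂μ :=
        integral_comp_add_smul_sub (fun y => M y ^ p) x hε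
  calc ∫ z in K, M (x + ε • (x - z)) ∂μ
    _ ≤ ((ε ^ finrank ℝ E)⁻¹ * ∫ y, M y ^ p ∂μ) ^ p⁻¹ :=
      (Real.le_rpow_inv_iff_of_pos (integral_nonneg fun z => hM0 _) (by positivity) hp0).2 jensen
    _ = ε ^ (-(finrank ℝ E / p)) * (∫ y, M y ^ p ∂μ) ^ p⁻¹ := by
      rw [Real.mul_rpow (by positivity) hnorm, ← Real.rpow_natCast, ← Real.rpow_neg hε.le,
        ← Real.rpow_mul hε.le, neg_mul, div_eq_mul_inv]

end Dilation

section DilationMean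

variable {E F : Type*} [NormedAddCommGroup E] [NormedSpace ℝ E] [MeasurableSpace E]
  [NormedAddCommGroup F] [NormedSpace ℝ F]

/-- The mean of `u` over the dilations `x ↦ x + ε (x - z)` with centres `z ∈ K`, weighted by `μ`.
It replaces convolution with a mollifier: for `ε > 0` these dilations move points away from the
centre, so a function vanishing outside a convex set keeps vanishing there. -/
noncomputable def dilationMean (μ : Measure E) (K : Set E) (u : E → F) (ε : ℝ) (x : E) : F :=
  ∫ z in K, u (x + ε • (x - z)) ∂μ

variable {μ : Measure E} {K : Set E} {u : E → F} {ε p : ℝ}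

lemma dilationMean_zero [CompleteSpace F] (hK : μ K = 1) (x : E) :
    dilationMean μ K u 0 x = u x := by
  simp [dilationMean, measureReal_def, hK]

lemma support_dilationMean_subset {s : Set E} (hs : Convex ℝ s) (hso : IsOpen s)
    (hKs : K ⊆ closure s) (hε : 0 ≤ ε) (hu : Function.support u ⊆ s) :
    Function.support (dilationMean μ K u ε) ⊆ s := by
  intro x hx
  by_contra hxs
  refine hx (setIntegral_eq_zero_of_forall_eq_zero fun z hz => ?_)
  by_contra hy
  have hcombo : (1 + ε)⁻¹ • (x + ε • (x - z)) + (ε * (1 + ε)⁻¹) • z = x := by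
    match_scalars
    all_goals field_simp
    ring
  have := hs.combo_interior_closure_mem_interior (hso.interior_eq.symm ▸ hu hy) (hKs hz)
    (a := (1 + ε)⁻¹) (b := ε * (1 + ε)⁻¹) (by positivity) (by positivity) (by field_simp)
  rw [hcombo, hso.interior_eq] at this
  exact hxs this

section Calculus

variable [BorelSpace E] [IsFiniteMeasureOnCompacts μ]

lemma hasFDerivAt_dilationMean (hK : IsCompact K) (hu : ContDiff ℝ 1 u)
    (huc : HasCompactSupport u) (x : E) :
    HasFDerivAt (dilationMean μ K u ε)
      (∫ z in K, (1 + ε) • fderiv ℝ u (x + ε • (x - z)) ∂μ) x := by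
  have hucont := hu.continuous
  have hu' : Continuous (fderiv ℝ u) := hu.continuous_fderiv one_ne_zero
  obtain ⟨B, hB⟩ := hu'.bounded_above_of_compact_support (huc.fderiv ℝ)
  have hint (y : E) : IntegrableOn (fun z => u (y + ε • (y - z))) K μ :=
    ContinuousOn.integrableOn_compact hK (by fun_prop)
  have hint' : IntegrableOn (fun z => (1 + ε) • fderiv ℝ u (x + ε • (x - z))) K μ :=
    ContinuousOn.integrableOn_compact hK (by fun_prop)
  refine hasFDerivAt_integral_of_dominated_of_fderiv_le
    (F' := fun y z => (1 + ε) • fderiv ℝ u (y + ε • (y - z))) (bound := fun _ => |1 + ε| * B)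
    Filter.univ_mem (.of_forall fun y => (hint y).aestronglyMeasurable) (hint x)
    hint'.aestronglyMeasurable (.of_forall fun z y _ => ?_)
    (integrableOn_const hK.measure_lt_top.ne) (.of_forall fun z y _ => ?_)
  · rw [norm_smul, Real.norm_eq_abs]
    gcongr
    exact hB _
  · have := (hu.differentiable one_ne_zero (y + ε • (y - z))).hasFDerivAt.comp y
      (hasFDerivAt_add_smul_sub ε y z)
    rwa [ContinuousLinearMap.comp_smul, ContinuousLinearMap.comp_id] at this

lemma contDiff_dilationMean [FiniteDimensional ℝ E] (hK : IsCompact K) (hu : ContDiff ℝ 1 u)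
    (huc : HasCompactSupport u) : ContDiff ℝ 1 (dilationMean μ K u ε) := by
  refine contDiff_one_iff_hasFDerivAt.2 ⟨_, ?_, hasFDerivAt_dilationMean hK hu huc⟩
  exact continuous_parametric_integral_of_continuous (by fun_prop) hK

lemma hasDerivAt_dilationMean (hK : IsCompact K) (hu : ContDiff ℝ 1 u)
    (huc : HasCompactSupport u) (x : E) :
    HasDerivAt (fun ε => dilationMean μ K u ε x)
      (∫ z in K, fderiv ℝ u (x + ε • (x - z)) (x - z) ∂μ) ε := by
  have hucont := hu.continuous
  have hu' : Continuous (fderiv ℝ u) := hu.continuous_fderiv one_ne_zero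
  obtain ⟨B, hB⟩ := hu'.bounded_above_of_compact_support (huc.fderiv ℝ)
  have hint (e : ℝ) : IntegrableOn (fun z => u (x + e • (x - z))) K μ :=
    ContinuousOn.integrableOn_compact hK (by fun_prop)
  have hint' : IntegrableOn (fun z => fderiv ℝ u (x + ε • (x - z)) (x - z)) K μ :=
    ContinuousOn.integrableOn_compact hK (by fun_prop)
  refine (hasDerivAt_integral_of_dominated_loc_of_deriv_le
    (F' := fun e z => fderiv ℝ u (x + e • (x - z)) (x - z)) (bound := fun z => B * ‖x - z‖)
    Filter.univ_mem (.of_forall fun e => (hint e).aestronglyMeasurable) (hint ε)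
    hint'.aestronglyMeasurable (.of_forall fun z e _ => ?_)
    (ContinuousOn.integrableOn_compact hK (by fun_prop)) (.of_forall fun z e _ => ?_)).2
  · exact ContinuousLinearMap.le_of_opNorm_le _ (hB _) _
  · exact (hu.differentiable one_ne_zero _).hasFDerivAt.comp_hasDerivAt e
      (hasDerivAt_add_smul_sub x z e)

end Calculus

variable [BorelSpace E] [FiniteDimensional ℝ E] [μ.IsAddHaarMeasure]

lemma setIntegral_norm_fderiv_dilation_le (hKμ : μ K = 1) (hu : ContDiff ℝ 1 u)
    (huc : HasCompactSupport u) (hp : 1 ≤ p) (x : E) (hε : 0 < ε) :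
    ∫ z in K, ‖fderiv ℝ u (x + ε • (x - z))‖ ∂μ ≤
      ε ^ (-(finrank ℝ E / p)) * (∫ y, ‖fderiv ℝ u y‖ ^ p ∂μ) ^ p⁻¹ := by
  have hp0 : 0 < p := by linarith
  have hu' : Continuous (fderiv ℝ u) := hu.continuous_fderiv one_ne_zero
  refine setIntegral_comp_add_smul_sub_le hKμ hp (fun y => norm_nonneg _) ?_ x hε
  exact (hu'.norm.rpow_const fun _ => .inr hp0.le).integrable_of_hasCompactSupport
    ((huc.fderiv ℝ).norm.comp_left (g := fun t : ℝ => t ^ p) (Real.zero_rpow hp0.ne'))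

lemma norm_fderiv_dilationMean_le (hK : IsCompact K) (hKμ : μ K = 1) (hu : ContDiff ℝ 1 u)
    (huc : HasCompactSupport u) (hp : 1 ≤ p) (hε : 0 < ε) (x : E) :
    ‖fderiv ℝ (dilationMean μ K u ε) x‖ ≤
      (1 + ε) * (ε ^ (-(finrank ℝ E / p)) * (∫ y, ‖fderiv ℝ u y‖ ^ p ∂μ) ^ p⁻¹) := by
  rw [(hasFDerivAt_dilationMean hK hu huc x).fderiv, integral_smul, norm_smul,
    Real.norm_of_nonneg (by positivity)]
  gcongr
  exact (norm_integral_le_integral_norm _).trans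
    (setIntegral_norm_fderiv_dilation_le hKμ hu huc hp x hε)

-- Integrating the derivative in `ε` converges at `0` precisely because `p` exceeds the dimension.
lemma norm_sub_dilationMean_le [CompleteSpace F] (hK : IsCompact K) (hKμ : μ K = 1)
    (hu : ContDiff ℝ 1 u) (huc : HasCompactSupport u) (hp : 1 ≤ p) (hdp : finrank ℝ E < p)
    (hε : 0 ≤ ε) {x : E} {D : ℝ} (hD : ∀ z ∈ K, ‖x - z‖ ≤ D) :
    ‖u x - dilationMean μ K u ε x‖ ≤ (1 - finrank ℝ E / p)⁻¹ * ε ^ (1 - finrank ℝ E / p) *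
      (∫ y, ‖fderiv ℝ u y‖ ^ p ∂μ) ^ p⁻¹ * D := by
  set α := finrank ℝ E / p
  set S := (∫ y, ‖fderiv ℝ u y‖ ^ p ∂μ) ^ p⁻¹
  have hD0 : 0 ≤ D := by
    obtain ⟨z, hz⟩ : K.Nonempty := nonempty_of_measure_ne_zero (μ := μ) (by simp [hKμ])
    exact (norm_nonneg _).trans (hD z hz)
  have hα : -1 < -α := neg_lt_neg ((div_lt_one (by linarith)).2 hdp)
  have hderiv_cont : Continuous fun e : ℝ => ∫ z in K, fderiv ℝ u (x + e • (x - z)) (x - z) ∂μ :=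
    continuous_parametric_integral_of_continuous (by fun_prop) hK
  have hderiv_le (e : ℝ) (he : e ∈ Ioc 0 ε) :
      ‖∫ z in K, fderiv ℝ u (x + e • (x - z)) (x - z) ∂μ‖ ≤ e ^ (-α) * (S * D) := by
    calc ‖∫ z in K, fderiv ℝ u (x + e • (x - z)) (x - z) ∂μ‖
      _ ≤ ∫ z in K, ‖fderiv ℝ u (x + e • (x - z))‖ * D ∂μ :=
        norm_integral_le_of_norm_le (ContinuousOn.integrableOn_compact hK (by fun_prop))
          ((ae_restrict_iff' hK.measurableSet).2 (.of_forall fun z hz =>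
            ContinuousLinearMap.le_opNorm_of_le _ (hD z hz)))
      _ ≤ e ^ (-α) * (S * D) := by
        rw [integral_mul_const, ← mul_assoc]
        gcongr
        exact setIntegral_norm_fderiv_dilation_le hKμ hu huc hp x he.1
  calc ‖u x - dilationMean μ K u ε x‖
    _ = ‖∫ e in 0..ε, ∫ z in K, fderiv ℝ u (x + e • (x - z)) (x - z) ∂μ‖ := by
      rw [intervalIntegral.integral_eq_sub_of_hasDerivAt
        (fun e _ => hasDerivAt_dilationMean hK hu huc x) (hderiv_cont.intervalIntegrable _ _),
        dilationMean_zero hKμ, norm_sub_rev]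
    _ ≤ ∫ e in 0..ε, e ^ (-α) * (S * D) :=
      intervalIntegral.norm_integral_le_of_norm_le hε (.of_forall hderiv_le)
        ((intervalIntegral.intervalIntegrable_rpow' hα).mul_const _)
    _ = (1 - α)⁻¹ * ε ^ (1 - α) * S * D := by
      rw [intervalIntegral.integral_mul_const, integral_rpow (.inl hα),
        Real.zero_rpow (by linarith), sub_zero, neg_add_eq_sub]
      ring

end DilationMean

lemma norm_fderiv_comp_le_of_lipschitzWith {E F G : Type*} [NormedAddCommGroup E]
    [NormedSpace ℝ E] [NormedAddCommGroup F] [NormedSpace ℝ F] [NormedAddCommGroup G]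
    [NormedSpace ℝ G] {f : E → F} {g : F → G} {x : E} {C : ℝ≥0} (hg : DifferentiableAt ℝ g (f x))
    (hf : DifferentiableAt ℝ f x) (hfC : LipschitzWith C f) :
    ‖fderiv ℝ (fun y => g (f y)) x‖ ≤ ‖fderiv ℝ g (f x)‖ * C := by
  rw [fderiv_fun_comp x hg hf]
  exact (ContinuousLinearMap.opNorm_comp_le _ _).trans
    (by gcongr; exact norm_fderiv_le_of_lipschitz ℝ hfC)

section Slice

variable {d : ℕ} (i : Fin (d + 1)) (t : ℝ)

lemma isometry_insertNth : Isometry fun y : Fin d → ℝ => (i.insertNth t y : Fin (d + 1) → ℝ) :=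
  Isometry.of_dist_eq fun y z => by simp [Fin.dist_insertNth_insertNth]

lemma contDiff_insertNth {k : WithTop ℕ∞} :
    ContDiff ℝ k fun y : Fin d → ℝ => (i.insertNth t y : Fin (d + 1) → ℝ) := by
  refine contDiff_pi.2 (Fin.succAboveCases i ?_ fun k => ?_)
  · simpa using contDiff_const
  · simpa using contDiff_apply ℝ ℝ k

lemma hasDerivAt_insertNth (y : Fin d → ℝ) :
    HasDerivAt (fun s : ℝ => (i.insertNth s y : Fin (d + 1) → ℝ)) (Pi.single i 1) t := by
  refine hasDerivAt_pi.2 (Fin.succAboveCases i ?_ fun k => ?_)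
  · simpa using hasDerivAt_id' t
  · simpa using hasDerivAt_const t (y k)

lemma lipschitzWith_removeNth : LipschitzWith 1 fun x : Fin (d + 1) → ℝ => i.removeNth x :=
  LipschitzWith.of_dist_le_mul fun x y => by
    rw [NNReal.coe_one, one_mul]
    exact (dist_pi_le_iff dist_nonneg).2 fun k => dist_le_pi_dist x y (i.succAbove k)

lemma contDiff_removeNth {k : WithTop ℕ∞} :
    ContDiff ℝ k fun x : Fin (d + 1) → ℝ => i.removeNth x :=
  contDiff_pi.2 fun j => contDiff_apply ℝ ℝ (i.succAbove j)

section Fubini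

variable {F : Type*} [NormedAddCommGroup F] {a b : Fin (d + 1) → ℝ} {f : (Fin (d + 1) → ℝ) → F}

lemma measurePreserving_insertNth_restrict_Icc :
    MeasurePreserving (MeasurableEquiv.piFinSuccAbove (fun _ : Fin (d + 1) => ℝ) i).symm
      ((volume.restrict (Icc (a i) (b i))).prod
        (volume.restrict (Icc (i.removeNth a) (i.removeNth b))))
      (volume.restrict (Icc a b)) := by
  have h := (volume_preserving_piFinSuccAbove (fun _ : Fin (d + 1) => ℝ) i).symm.restrict_preimage
    (measurableSet_Icc (a := a) (b := b))
  have hpre : (MeasurableEquiv.piFinSuccAbove (fun _ : Fin (d + 1) => ℝ) i).symm ⁻¹' Icc a b =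
      Icc (a i) (b i) ×ˢ Icc (i.removeNth a) (i.removeNth b) :=
    Set.ext fun _ => Fin.insertNth_mem_Icc
  rwa [hpre, Measure.volume_eq_prod, ← Measure.prod_restrict] at h

lemma integrable_comp_insertNth (hf : IntegrableOn f (Icc a b)) :
    Integrable (fun p : ℝ × (Fin d → ℝ) => f (i.insertNth p.1 p.2))
      ((volume.restrict (Icc (a i) (b i))).prod
        (volume.restrict (Icc (i.removeNth a) (i.removeNth b)))) :=
  (measurePreserving_insertNth_restrict_Icc i).integrable_comp_of_integrable hf

variable [NormedSpace ℝ F]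

lemma integrableOn_integral_insertNth (hf : IntegrableOn f (Icc a b)) :
    IntegrableOn (fun s => ∫ y in Icc (i.removeNth a) (i.removeNth b), f (i.insertNth s y))
      (Icc (a i) (b i)) :=
  (integrable_comp_insertNth i hf).integral_prod_left

lemma setIntegral_Icc_eq_integral_insertNth (hf : IntegrableOn f (Icc a b)) :
    ∫ x in Icc a b, f x =
      ∫ s in Icc (a i) (b i), ∫ y in Icc (i.removeNth a) (i.removeNth b), f (i.insertNth s y) := by
  rw [← integral_prod _ (integrable_comp_insertNth i hf)]
  exact ((measurePreserving_insertNth_restrict_Icc i).integral_comp' f).symm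

end Fubini

section Line

variable {F : Type*} [NormedAddCommGroup F] [NormedSpace ℝ F] {i t}

lemma norm_insertNth_le_integral_norm_fderiv [CompleteSpace F] {u : (Fin (d + 1) → ℝ) → F}
    (hu : ContDiff ℝ 1 u) {a b : ℝ} (ht : t ∈ Icc a b) {y : Fin d → ℝ}
    (hu0 : u (i.insertNth a y) = 0) :
    ‖u (i.insertNth t y)‖ ≤ ∫ s in Icc a b, ‖fderiv ℝ u (i.insertNth s y)‖ := by
  have hline : Continuous fun s : ℝ => (i.insertNth s y : Fin (d + 1) → ℝ) :=
    continuous_id.finInsertNth (A := fun _ => ℝ) i continuous_const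
  have hcont : Continuous fun s : ℝ => fderiv ℝ u (i.insertNth s y) :=
    (hu.continuous_fderiv one_ne_zero).comp hline
  have hderiv (s : ℝ) : HasDerivAt (fun s => u (i.insertNth s y))
      (fderiv ℝ u (i.insertNth s y) (Pi.single i 1)) s :=
    (hu.differentiable one_ne_zero _).hasFDerivAt.comp_hasDerivAt s (hasDerivAt_insertNth i s y)
  calc ‖u (i.insertNth t y)‖
    _ = ‖∫ s in a..t, fderiv ℝ u (i.insertNth s y) (Pi.single i 1)‖ := by
      rw [intervalIntegral.integral_eq_sub_of_hasDerivAt (fun s _ => hderiv s)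
        ((hcont.clm_apply continuous_const).intervalIntegrable _ _), hu0, sub_zero]
    _ ≤ ∫ s in a..t, ‖fderiv ℝ u (i.insertNth s y)‖ :=
      intervalIntegral.norm_integral_le_of_norm_le ht.1
        (.of_forall fun s _ => ContinuousLinearMap.unit_le_opNorm _ _ (by simp [Pi.norm_single]))
        (hcont.norm.intervalIntegrable _ _)
    _ ≤ ∫ s in Icc a b, ‖fderiv ℝ u (i.insertNth s y)‖ := by
      rw [intervalIntegral.integral_of_le ht.1]
      exact setIntegral_mono_set (hcont.norm.integrableOn_Icc)
        (.of_forall fun s => norm_nonneg _) (.of_forall (Ioc_subset_Icc_self.trans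
          (Icc_subset_Icc_right ht.2)))

end Line

end Slice

section UnitCube

variable {n d : ℕ}

lemma unitCube_eq_pi : unitCube n = univ.pi fun _ => Ioo 0 1 := by
  ext x
  simp [unitCube]

lemma isOpen_unitCube : IsOpen (unitCube n) := by
  rw [unitCube_eq_pi]
  exact isOpen_set_pi finite_univ fun _ _ => isOpen_Ioo

lemma convex_unitCube : Convex ℝ (unitCube n) := by
  rw [unitCube_eq_pi]
  exact convex_pi fun _ _ => convex_Ioo 0 1

lemma closure_unitCube : closure (unitCube n) = Icc 0 1 := by
  simp only [unitCube_eq_pi, closure_pi_set, closure_Ioo (zero_ne_one' ℝ)]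
  exact pi_univ_Icc 0 1

lemma unitCube_subset_Icc : unitCube n ⊆ Icc 0 1 :=
  closure_unitCube (n := n) ▸ subset_closure

lemma restrict_unitCube :
    (volume : Measure (Fin n → ℝ)).restrict (unitCube n) = volume.restrict (Icc 0 1) := by
  rw [unitCube_eq_pi]
  exact Measure.restrict_congr_set Measure.univ_pi_Ioo_ae_eq_Icc

lemma volume_Icc_zero_one : volume (Icc (0 : Fin n → ℝ) 1) = 1 := by
  simp [Real.volume_Icc_pi]

lemma setIntegral_Icc_zero_one_add_const {f : (Fin n → ℝ) → ℝ} (hf : IntegrableOn f (Icc 0 1))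
    (c : ℝ) : ∫ x in Icc 0 1, (f x + c) = (∫ x in Icc 0 1, f x) + c := by
  rw [integral_add hf (integrableOn_const (by simp [volume_Icc_zero_one]))]
  simp [measureReal_def, volume_Icc_zero_one]

lemma norm_sub_le_one_of_mem_Icc {x z : Fin n → ℝ} (hx : x ∈ Icc 0 1) (hz : z ∈ Icc 0 1) :
    ‖x - z‖ ≤ 1 := by
  refine (pi_norm_le_iff_of_nonneg zero_le_one).2 fun j => ?_
  simpa using abs_sub_le_of_le_of_le (hx.1 j) (hx.2 j) (hz.1 j) (hz.2 j)

lemma insertNth_mem_unitCube {i : Fin (d + 1)} {t : ℝ} {y : Fin d → ℝ} :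
    i.insertNth t y ∈ unitCube (d + 1) ↔ t ∈ Ioo 0 1 ∧ y ∈ unitCube d := by
  simp [unitCube, Fin.forall_iff_succAbove i]

variable {F : Type*} [NormedAddCommGroup F] [NormedSpace ℝ F]

lemma norm_le_integral_norm_fderiv_insertNth [CompleteSpace F] {u : (Fin (d + 1) → ℝ) → F}
    (hu : ContDiff ℝ 1 u) (hsupp : Function.support u ⊆ unitCube (d + 1)) (i : Fin (d + 1))
    (x : Fin (d + 1) → ℝ) :
    ‖u x‖ ≤ ∫ s in Icc 0 1, ‖fderiv ℝ u (i.insertNth s (i.removeNth x))‖ := by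
  by_cases hx : u x = 0
  · rw [hx, norm_zero]
    positivity
  have hxi : x i ∈ Icc (0 : ℝ) 1 := Ioo_subset_Icc_self (hsupp hx i)
  have hface : u (i.insertNth 0 (i.removeNth x)) = 0 := by
    by_contra h
    exact (insertNth_mem_unitCube.1 (hsupp h)).1.1.false
  simpa only [Fin.insertNth_self_removeNth] using
    norm_insertNth_le_integral_norm_fderiv hu hxi hface

lemma norm_le_of_norm_fderiv_le_of_support_subset [CompleteSpace F] [NeZero n]
    {u : (Fin n → ℝ) → F} (hu : ContDiff ℝ 1 u) (hsupp : Function.support u ⊆ unitCube n) {P : ℝ}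
    (hP : ∀ x, ‖fderiv ℝ u x‖ ≤ P) (x : Fin n → ℝ) : ‖u x‖ ≤ P := by
  obtain ⟨d, rfl⟩ := Nat.exists_eq_add_one_of_ne_zero (NeZero.ne n)
  calc ‖u x‖
    _ ≤ ∫ s in Icc 0 1, ‖fderiv ℝ u (Fin.insertNth 0 s (Fin.removeNth 0 x))‖ :=
      norm_le_integral_norm_fderiv_insertNth hu hsupp 0 x
    _ ≤ ∫ _s in Icc (0 : ℝ) 1, P :=
      integral_mono_of_nonneg (.of_forall fun _ => norm_nonneg _) (integrableOn_const (by simp))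
        (.of_forall fun _ => hP _)
    _ = P := by simp

lemma norm_le_integral_norm_fderiv_of_dim_one [CompleteSpace F] {u : (Fin 1 → ℝ) → F}
    (hu : ContDiff ℝ 1 u) (hsupp : Function.support u ⊆ unitCube 1) (x : Fin 1 → ℝ) :
    ‖u x‖ ≤ ∫ y in Icc 0 1, ‖fderiv ℝ u y‖ := by
  rw [setIntegral_Icc_eq_integral_insertNth 0
    (hu.continuous_fderiv one_ne_zero).norm.integrableOn_Icc]
  refine (norm_le_integral_norm_fderiv_insertNth hu hsupp 0 x).trans_eq ?_
  congr! 2 with s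
  rw [setIntegral_congr_fun (g := fun _ => ‖fderiv ℝ u (Fin.insertNth 0 s (Fin.removeNth 0 x))‖)
    measurableSet_Icc fun y _ => by rw [Subsingleton.elim y]]
  simp [Measure.real]

end UnitCube

section Solenoidal

variable {d : ℕ} {a b a' b' : Fin (d + 1) → ℝ} {Φ : (Fin (d + 1) → ℝ) → (Fin (d + 1) → ℝ)}

/-- A vector field which is continuous on the closed box `[a, b]`, and differentiable with vanishing
divergence on the open box `(a, b)`. -/
structure IsSolenoidalOnBox {n : ℕ} (a b : Fin n → ℝ) (Φ : (Fin n → ℝ) → (Fin n → ℝ)) : Prop where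
  continuousOn : ContinuousOn Φ (Icc a b)
  differentiableAt : ∀ x ∈ univ.pi fun j => Ioo (a j) (b j), DifferentiableAt ℝ Φ x
  sum_pdn_eq_zero : ∀ x ∈ univ.pi fun j => Ioo (a j) (b j), ∑ j, pdn j (fun y => Φ y j) x = 0

namespace IsSolenoidalOnBox

lemma mono (hΦ : IsSolenoidalOnBox a b Φ) (ha : a ≤ a') (hb : b' ≤ b) :
    IsSolenoidalOnBox a' b' Φ := by
  have hsub : (univ.pi fun j => Ioo (a' j) (b' j)) ⊆ univ.pi fun j => Ioo (a j) (b j) :=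
    pi_mono fun j _ => Ioo_subset_Ioo (ha j) (hb j)
  exact ⟨hΦ.continuousOn.mono (Icc_subset_Icc ha hb), fun x hx => hΦ.differentiableAt x (hsub hx),
    fun x hx => hΦ.sum_pdn_eq_zero x (hsub hx)⟩

lemma integrableOn_norm (hΦ : IsSolenoidalOnBox a b Φ) :
    IntegrableOn (fun x => ‖Φ x‖) (Icc a b) :=
  hΦ.continuousOn.norm.integrableOn_compact isCompact_Icc

lemma integral_fderiv_apply (hΦ : IsSolenoidalOnBox a b Φ) (hab : a ≤ b)
    {ζ : (Fin (d + 1) → ℝ) → ℝ} (hζ : ContDiff ℝ 1 ζ) :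
    ∫ x in Icc a b, fderiv ℝ ζ x (Φ x) =
      ∑ j, ((∫ y in Icc (j.removeNth a) (j.removeNth b),
          ζ (j.insertNth (b j) y) * Φ (j.insertNth (b j) y) j) -
        ∫ y in Icc (j.removeNth a) (j.removeNth b),
          ζ (j.insertNth (a j) y) * Φ (j.insertNth (a j) y) j) := by
  set f' : Fin (d + 1) → (Fin (d + 1) → ℝ) → (Fin (d + 1) → ℝ) →L[ℝ] ℝ := fun j x =>
    ζ x • fderiv ℝ (fun y => Φ y j) x + Φ x j • fderiv ℝ ζ x
  have hdiv (x) (hx : x ∈ univ.pi fun j => Ioo (a j) (b j)) :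
      ∑ j, f' j x (Pi.single j 1) = fderiv ℝ ζ x (Φ x) := by
    have hΦx : ∑ j, fderiv ℝ (fun y => Φ y j) x (Pi.single j 1) = 0 := hΦ.sum_pdn_eq_zero x hx
    conv_rhs => rw [pi_eq_sum_univ' (Φ x), map_sum]
    simp [f', Finset.sum_add_distrib, ← Finset.mul_sum, hΦx]
  have hdiv_ae : (fun x => ∑ j, f' j x (Pi.single j 1)) =ᵐ[volume.restrict (Icc a b)]
      fun x => fderiv ℝ ζ x (Φ x) := by
    rw [volume_pi, ← Measure.restrict_congr_set Measure.univ_pi_Ioo_ae_eq_Icc]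
    exact (ae_restrict_iff' (.univ_pi fun _ => measurableSet_Ioo)).2 (.of_forall hdiv)
  have hint : IntegrableOn (fun x => fderiv ℝ ζ x (Φ x)) (Icc a b) :=
    (((hζ.continuous_fderiv one_ne_zero).continuousOn).clm_apply
      hΦ.continuousOn).integrableOn_compact isCompact_Icc
  rw [← integral_congr_ae hdiv_ae]
  exact integral_divergence_of_hasFDerivAt_off_countable' a b hab (fun j x => ζ x * Φ x j) f' ∅
    countable_empty
    (fun j => hζ.continuous.continuousOn.mul (continuousOn_pi.1 hΦ.continuousOn j))
    (fun x hx j => (hζ.differentiable one_ne_zero x).hasFDerivAt.mul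
      (differentiableAt_pi.1 (hΦ.differentiableAt x hx.1) j).hasFDerivAt)
    (hint.congr hdiv_ae.symm)

end IsSolenoidalOnBox

/-- The flux of `Φ` through the slice `x i = t` of the unit cube, weighted by `ψ`. -/
noncomputable def sliceFlux (Φ : (Fin (d + 1) → ℝ) → (Fin (d + 1) → ℝ)) (i : Fin (d + 1))
    (ψ : (Fin d → ℝ) → ℝ) (t : ℝ) : ℝ :=
  ∫ y in Icc 0 1, ψ y * Φ (i.insertNth t y) i

variable {i : Fin (d + 1)} {s t : ℝ} {ψ : (Fin d → ℝ) → ℝ}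

lemma continuousOn_comp_insertNth {F : Type*} [TopologicalSpace F] {f : (Fin (d + 1) → ℝ) → F}
    (hf : ContinuousOn f (Icc 0 1)) (ht : t ∈ Icc 0 1) :
    ContinuousOn (fun y => f (i.insertNth t y)) (Icc 0 1) :=
  hf.comp (isometry_insertNth i t).continuous.continuousOn
    fun _ hy => Fin.insertNth_mem_Icc.2 ⟨ht, hy⟩

lemma sliceFlux_sub (hΦ : ContinuousOn Φ (Icc 0 1)) (ht : t ∈ Icc 0 1) {u : (Fin d → ℝ) → ℝ}
    (hu : Continuous u) (hψ : Continuous ψ) :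
    sliceFlux Φ i (u - ψ) t = sliceFlux Φ i u t - sliceFlux Φ i ψ t := by
  have hΦi := continuousOn_comp_insertNth (i := i) (continuousOn_pi.1 hΦ i) ht
  simp only [sliceFlux, Pi.sub_apply, sub_mul]
  exact integral_sub ((hu.continuousOn.mul hΦi).integrableOn_compact isCompact_Icc)
    ((hψ.continuousOn.mul hΦi).integrableOn_compact isCompact_Icc)

lemma abs_sliceFlux_le_of_abs_le (hΦ : ContinuousOn Φ (Icc 0 1)) (ht : t ∈ Icc 0 1) {P : ℝ}
    (hP : ∀ y ∈ Icc 0 1, |ψ y| ≤ P) :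
    |sliceFlux Φ i ψ t| ≤ P * ∫ y in Icc 0 1, ‖Φ (i.insertNth t y)‖ := by
  have hint : IntegrableOn (fun y => ‖Φ (i.insertNth t y)‖) (Icc 0 1) :=
    (continuousOn_comp_insertNth hΦ ht).norm.integrableOn_compact isCompact_Icc
  rw [← integral_const_mul, ← Real.norm_eq_abs]
  refine norm_integral_le_of_norm_le (hint.const_mul P)
    ((ae_restrict_iff' measurableSet_Icc).2 (.of_forall fun y hy => ?_))
  rw [norm_mul]
  exact mul_le_mul (hP y hy) (norm_le_pi_norm _ i) (norm_nonneg _)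
    ((abs_nonneg _).trans (hP y hy))

namespace IsSolenoidalOnBox

lemma sliceFlux_sub_sliceFlux (hΦ : IsSolenoidalOnBox 0 1 Φ) (hψ : ContDiff ℝ 1 ψ)
    (hsupp : Function.support ψ ⊆ unitCube d) (hs : 0 ≤ s) (hst : s ≤ t) (ht : t ≤ 1) :
    sliceFlux Φ i ψ t - sliceFlux Φ i ψ s =
      ∫ x in Icc (i.insertNth s 0 : Fin (d + 1) → ℝ) (i.insertNth t 1),
        fderiv ℝ (fun x => ψ (i.removeNth x)) x (Φ x) := by
  have hψ0 {y : Fin d → ℝ} {k : Fin d} (h : y k ∉ Ioo (0 : ℝ) 1) : ψ y = 0 := by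
    by_contra hy
    exact h (hsupp hy k)
  have hle : (i.insertNth s 0 : Fin (d + 1) → ℝ) ≤ i.insertNth t 1 :=
    Fin.insertNth_le_iff.2 (by simp [hst, Pi.le_def])
  have hslab : IsSolenoidalOnBox (i.insertNth s 0 : Fin (d + 1) → ℝ) (i.insertNth t 1) Φ :=
    hΦ.mono (Fin.le_insertNth_iff.2 ⟨hs, le_rfl⟩) (Fin.insertNth_le_iff.2 ⟨ht, le_rfl⟩)
  have hζ : ContDiff ℝ 1 fun x : Fin (d + 1) → ℝ => ψ (i.removeNth x) :=
    hψ.comp (contDiff_removeNth i)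
  rw [hslab.integral_fderiv_apply hle hζ, Finset.sum_eq_single i]
  · simp only [sliceFlux, Fin.insertNth_apply_same, Fin.removeNth_insertNth]
  · intro j _ hj
    obtain ⟨k, rfl⟩ := Fin.exists_succAbove_eq hj
    have hlateral {c : ℝ} (hc : c ∉ Ioo (0 : ℝ) 1) (y : Fin d → ℝ) :
        ψ (i.removeNth ((i.succAbove k).insertNth c y : Fin (d + 1) → ℝ)) = 0 :=
      hψ0 (k := k) (by rwa [Fin.removeNth_apply, Fin.insertNth_apply_same])
    simp [hlateral]
  · simp

lemma abs_sliceFlux_sub_sliceFlux_le (hΦ : IsSolenoidalOnBox 0 1 Φ) (hψ : ContDiff ℝ 1 ψ)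
    (hsupp : Function.support ψ ⊆ unitCube d) {P : ℝ} (hP : ∀ y, ‖fderiv ℝ ψ y‖ ≤ P)
    (hs : s ∈ Icc 0 1) (ht : t ∈ Icc 0 1) :
    |sliceFlux Φ i ψ t - sliceFlux Φ i ψ s| ≤ P * ∫ x in Icc 0 1, ‖Φ x‖ := by
  wlog hst : s ≤ t
  · rw [abs_sub_comm]
    exact this hΦ hψ hsupp hP ht hs (le_of_not_ge hst)
  have hP0 : 0 ≤ P := (norm_nonneg _).trans (hP 0)
  have hsub : Icc (i.insertNth s 0 : Fin (d + 1) → ℝ) (i.insertNth t 1) ⊆ Icc 0 1 :=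
    Icc_subset_Icc (Fin.le_insertNth_iff.2 ⟨hs.1, le_rfl⟩) (Fin.insertNth_le_iff.2 ⟨ht.2, le_rfl⟩)
  have hgrad (x : Fin (d + 1) → ℝ) : ‖fderiv ℝ (fun x => ψ (i.removeNth x)) x‖ ≤ P := by
    have := norm_fderiv_comp_le_of_lipschitzWith
      (hψ.differentiable one_ne_zero (i.removeNth x))
      ((contDiff_removeNth i).differentiable one_ne_zero x) (lipschitzWith_removeNth i)
    rw [NNReal.coe_one, mul_one] at this
    exact this.trans (hP _)
  rw [hΦ.sliceFlux_sub_sliceFlux hψ hsupp hs.1 hst ht.2]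
  calc ‖∫ x in Icc (i.insertNth s 0 : Fin (d + 1) → ℝ) (i.insertNth t 1),
        fderiv ℝ (fun x => ψ (i.removeNth x)) x (Φ x)‖
    _ ≤ ∫ x in Icc (i.insertNth s 0 : Fin (d + 1) → ℝ) (i.insertNth t 1), P * ‖Φ x‖ :=
      norm_integral_le_of_norm_le ((hΦ.integrableOn_norm.mono_set hsub).const_mul P)
        (.of_forall fun x => ContinuousLinearMap.le_of_opNorm_le _ (hgrad x) _)
    _ ≤ P * ∫ x in Icc 0 1, ‖Φ x‖ := by
      rw [integral_const_mul]
      gcongr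
      exacts [.of_forall fun x => norm_nonneg _, hΦ.integrableOn_norm]

-- The mean of the fluxes over all slices is controlled directly, and no flux is far from the mean.
lemma abs_sliceFlux_le (hΦ : IsSolenoidalOnBox 0 1 Φ) (hψ : ContDiff ℝ 1 ψ)
    (hsupp : Function.support ψ ⊆ unitCube d) {P₀ P₁ : ℝ} (hP₀ : ∀ y ∈ Icc 0 1, |ψ y| ≤ P₀)
    (hP₁ : ∀ y, ‖fderiv ℝ ψ y‖ ≤ P₁) (ht : t ∈ Icc 0 1) :
    |sliceFlux Φ i ψ t| ≤ (P₀ + P₁) * ∫ x in Icc 0 1, ‖Φ x‖ := by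
  set A := ∫ x in Icc 0 1, ‖Φ x‖
  have hfubini : A = ∫ s in Icc 0 1, ∫ y in Icc 0 1, ‖Φ (i.insertNth s y)‖ :=
    setIntegral_Icc_eq_integral_insertNth (f := fun x => ‖Φ x‖) i hΦ.integrableOn_norm
  have hint : IntegrableOn (fun s => ∫ y in Icc 0 1, ‖Φ (i.insertNth s y)‖) (Icc 0 1) :=
    integrableOn_integral_insertNth i hΦ.integrableOn_norm
  have hle (s : ℝ) (hs : s ∈ Icc 0 1) :
      |sliceFlux Φ i ψ t| ≤ P₀ * (∫ y in Icc 0 1, ‖Φ (i.insertNth s y)‖) + P₁ * A := by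
    linarith [abs_sub_abs_le_abs_sub (sliceFlux Φ i ψ t) (sliceFlux Φ i ψ s),
      abs_sliceFlux_le_of_abs_le (i := i) hΦ.continuousOn hs hP₀,
      hΦ.abs_sliceFlux_sub_sliceFlux_le (i := i) hψ hsupp hP₁ hs ht]
  calc |sliceFlux Φ i ψ t|
    _ = ∫ _s in Icc (0 : ℝ) 1, |sliceFlux Φ i ψ t| := by simp
    _ ≤ ∫ s in Icc 0 1, (P₀ * (∫ y in Icc 0 1, ‖Φ (i.insertNth s y)‖) + P₁ * A) :=
      setIntegral_mono_on (integrableOn_const (by simp))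
        ((hint.const_mul P₀).add (integrableOn_const (by simp))) measurableSet_Icc hle
    _ = (P₀ + P₁) * A := by
      rw [integral_add (hint.const_mul P₀) (integrableOn_const (by simp)), integral_const_mul,
        ← hfubini]
      simp [add_mul]

end IsSolenoidalOnBox

end Solenoidal

section Interpolation

-- The choice `ε = A / b` balances the two terms.
lemma le_mul_rpow_mul_rpow_of_forall_le {X A b c₁ c₂ α : ℝ} (hα : α < 1) (hA : 0 ≤ A)
    (hAb : A ≤ b)
    (h : ∀ ε ∈ Ioc (0 : ℝ) 1, X ≤ c₁ * ε ^ (1 - α) * b + c₂ * ε ^ (-α) * A) :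
    X ≤ (c₁ + c₂) * (A ^ (1 - α) * b ^ α) := by
  have hα' : 0 < 1 - α := sub_pos.2 hα
  rcases hA.eq_or_lt with rfl | hA
  · have hlim : Filter.Tendsto (fun ε : ℝ => c₁ * ε ^ (1 - α) * b) (nhdsWithin 0 (Ioi 0))
        (nhds 0) := by
      have := ((Real.continuousAt_rpow_const 0 (1 - α) (.inr hα'.le)).tendsto.const_mul
        c₁).mul_const b
      rw [Real.zero_rpow hα'.ne', mul_zero, zero_mul] at this
      exact this.mono_left nhdsWithin_le_nhds
    rw [Real.zero_rpow hα'.ne', zero_mul, mul_zero]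
    refine ge_of_tendsto hlim ?_
    filter_upwards [Ioc_mem_nhdsGT zero_lt_one] with ε hε
    simpa using h ε hε
  · have hb : 0 < b := hA.trans_le hAb
    have hsplit {s : ℝ} : (A / b) ^ s = A ^ s * b ^ (-s) := by
      rw [Real.div_rpow hA.le hb.le, Real.rpow_neg hb.le, div_eq_mul_inv]
    calc X
      _ ≤ c₁ * (A / b) ^ (1 - α) * b + c₂ * (A / b) ^ (-α) * A :=
        h _ ⟨by positivity, (div_le_one hb).2 hAb⟩
      _ = c₁ * (A ^ (1 - α) * (b ^ (-(1 - α)) * b ^ (1 : ℝ))) +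
          c₂ * (A ^ (-α) * A ^ (1 : ℝ) * b ^ α) := by
        rw [hsplit, hsplit, neg_neg, Real.rpow_one, Real.rpow_one]
        ring
      _ = (c₁ + c₂) * (A ^ (1 - α) * b ^ α) := by
        rw [← Real.rpow_add hb, ← Real.rpow_add hA, neg_sub, sub_add_cancel, neg_add_eq_sub]
        ring

variable {X : Type*} [MeasurableSpace X] {μ : Measure X} {f g : X → ℝ} {a b : ℝ}

lemma integrable_rpow_mul_rpow (hf : Integrable f μ) (hg : Integrable g μ) (hf0 : 0 ≤ f)
    (hg0 : 0 ≤ g) (ha : 0 ≤ a) (hb : 0 ≤ b) (hab : a + b = 1) :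
    Integrable (fun x => f x ^ a * g x ^ b) μ := by
  refine ((hf.const_mul a).add (hg.const_mul b)).mono'
    ((hf.aemeasurable.pow_const a).mul (hg.aemeasurable.pow_const b)).aestronglyMeasurable
    (.of_forall fun x => ?_)
  rw [Real.norm_of_nonneg (mul_nonneg (Real.rpow_nonneg (hf0 x) _) (Real.rpow_nonneg (hg0 x) _))]
  exact Real.geom_mean_le_arith_mean2_weighted ha hb (hf0 x) (hg0 x) hab

lemma integral_rpow_mul_rpow_le (hf : Integrable f μ) (hg : Integrable g μ) (hf0 : 0 ≤ f)
    (hg0 : 0 ≤ g) (ha : 0 ≤ a) (hb : 0 ≤ b) (hab : a + b = 1) :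
    ∫ x, f x ^ a * g x ^ b ∂μ ≤ (∫ x, f x ∂μ) ^ a * (∫ x, g x ∂μ) ^ b := by
  have hfa (x : X) : 0 ≤ f x ^ a := Real.rpow_nonneg (hf0 x) a
  have hgb (x : X) : 0 ≤ g x ^ b := Real.rpow_nonneg (hg0 x) b
  have hF : 0 ≤ ∫ x, f x ∂μ := integral_nonneg hf0
  have hG : 0 ≤ ∫ x, g x ∂μ := integral_nonneg hg0
  rw [← ENNReal.ofReal_le_ofReal_iff (by positivity), ofReal_integral_eq_lintegral_ofReal
    (integrable_rpow_mul_rpow hf hg hf0 hg0 ha hb hab)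
    (.of_forall fun x => mul_nonneg (hfa x) (hgb x)), ENNReal.ofReal_mul (by positivity),
    ← ENNReal.ofReal_rpow_of_nonneg hF ha, ← ENNReal.ofReal_rpow_of_nonneg hG hb,
    ofReal_integral_eq_lintegral_ofReal hf (.of_forall hf0),
    ofReal_integral_eq_lintegral_ofReal hg (.of_forall hg0)]
  simp only [ENNReal.ofReal_mul (hfa _), ← ENNReal.ofReal_rpow_of_nonneg (hf0 _) ha,
    ← ENNReal.ofReal_rpow_of_nonneg (hg0 _) hb]
  exact ENNReal.lintegral_mul_norm_pow_le hf.aemeasurable.ennreal_ofReal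
    hg.aemeasurable.ennreal_ofReal ha hb hab

-- Hölder's inequality in the height `t`, applied to an estimate on each slice.
lemma abs_setIntegral_Icc_le_of_forall_insertNth_le {d : ℕ} (i : Fin (d + 1))
    {l r : Fin (d + 1) → ℝ} {f g h : (Fin (d + 1) → ℝ) → ℝ} (hf : IntegrableOn f (Icc l r))
    (hg : IntegrableOn g (Icc l r)) (hh : IntegrableOn h (Icc l r)) (hg0 : 0 ≤ g) (hh0 : 0 ≤ h)
    (ha : 0 ≤ a) (hb : 0 ≤ b) (hab : a + b = 1) {C : ℝ} (hC : 0 ≤ C)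
    (hle : ∀ t ∈ Icc (l i) (r i),
      |∫ y in Icc (i.removeNth l) (i.removeNth r), f (i.insertNth t y)| ≤
        C * ((∫ y in Icc (i.removeNth l) (i.removeNth r), g (i.insertNth t y)) ^ a *
          (∫ y in Icc (i.removeNth l) (i.removeNth r), h (i.insertNth t y)) ^ b)) :
    |∫ x in Icc l r, f x| ≤ C * ((∫ x in Icc l r, g x) ^ a * (∫ x in Icc l r, h x) ^ b) := by
  simp only [setIntegral_Icc_eq_integral_insertNth i hf, setIntegral_Icc_eq_integral_insertNth i hg,
    setIntegral_Icc_eq_integral_insertNth i hh]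
  have hG := integrableOn_integral_insertNth i hg
  have hH := integrableOn_integral_insertNth i hh
  have hG0 : 0 ≤ fun t => ∫ y in Icc (i.removeNth l) (i.removeNth r), g (i.insertNth t y) :=
    fun t => integral_nonneg fun y => hg0 _
  have hH0 : 0 ≤ fun t => ∫ y in Icc (i.removeNth l) (i.removeNth r), h (i.insertNth t y) :=
    fun t => integral_nonneg fun y => hh0 _
  rw [← Real.norm_eq_abs]
  refine (norm_integral_le_of_norm_le
    ((integrable_rpow_mul_rpow hG hH hG0 hH0 ha hb hab).const_mul C)
    ((ae_restrict_iff' measurableSet_Icc).2 (.of_forall hle))).trans ?_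
  rw [integral_const_mul]
  gcongr
  exact integral_rpow_mul_rpow_le hG hH hG0 hH0 ha hb hab

end Interpolation

section ComponentEstimate

variable {n d : ℕ} {F : Type*} [NormedAddCommGroup F]

lemma hasCompactSupport_of_support_subset_unitCube {u : (Fin n → ℝ) → F}
    (hsupp : Function.support u ⊆ unitCube n) : HasCompactSupport u :=
  HasCompactSupport.of_support_subset_isCompact isCompact_Icc (hsupp.trans unitCube_subset_Icc)

lemma support_comp_insertNth_subset {u : (Fin (d + 1) → ℝ) → F}
    (hsupp : Function.support u ⊆ unitCube (d + 1)) (i : Fin (d + 1)) (t : ℝ) :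
    Function.support (fun y => u (i.insertNth t y)) ⊆ unitCube d :=
  fun _ hy => (insertNth_mem_unitCube.1 (hsupp hy)).2

variable [NormedSpace ℝ F]

lemma integrableOn_norm_fderiv_rpow {u : (Fin n → ℝ) → F} (hu : ContDiff ℝ 1 u) {p : ℝ}
    (hp : 0 ≤ p) : IntegrableOn (fun x => ‖fderiv ℝ u x‖ ^ p) (Icc 0 1) :=
  ((hu.continuous_fderiv one_ne_zero).norm.rpow_const fun _ => .inr hp).integrableOn_Icc

lemma integral_norm_fderiv_comp_insertNth_rpow_le {u : (Fin (d + 1) → ℝ) → F}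
    (hu : ContDiff ℝ 1 u) (hsupp : Function.support u ⊆ unitCube (d + 1)) (i : Fin (d + 1))
    (t : ℝ) {p : ℝ} (hp : 0 < p) :
    ∫ y, ‖fderiv ℝ (fun y => u (i.insertNth t y)) y‖ ^ p ≤
      ∫ y in Icc 0 1, ‖fderiv ℝ u (i.insertNth t y)‖ ^ p := by
  have hslice : ContDiff ℝ 1 fun y => u (i.insertNth t y) := hu.comp (contDiff_insertNth i t)
  have hsupp' : Function.support (fun y => ‖fderiv ℝ (fun y => u (i.insertNth t y)) y‖ ^ p) ⊆
      Icc 0 1 := fun y hy => closure_unitCube.le <|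
    (support_fderiv_subset ℝ).trans (closure_mono (support_comp_insertNth_subset hsupp i t))
      fun h => hy (by simp [h, hp.ne'])
  rw [← setIntegral_eq_integral_of_forall_compl_eq_zero fun y hy =>
    Function.notMem_support.1 fun h => hy (hsupp' h)]
  refine setIntegral_mono (integrableOn_norm_fderiv_rpow hslice hp.le)
    (((hu.continuous_fderiv one_ne_zero).comp (isometry_insertNth i t).continuous).norm.rpow_const
      fun _ => .inr hp.le).integrableOn_Icc fun y => ?_
  have := norm_fderiv_comp_le_of_lipschitzWith (hu.differentiable one_ne_zero (i.insertNth t y))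
    ((contDiff_insertNth i t).differentiable one_ne_zero y) (isometry_insertNth i t).lipschitz
  rw [NNReal.coe_one, mul_one] at this
  exact Real.rpow_le_rpow (norm_nonneg _) this hp.le

variable {i : Fin (d + 1)} {t : ℝ} {Φ : (Fin (d + 1) → ℝ) → (Fin (d + 1) → ℝ)}

lemma abs_sliceFlux_sub_dilationMean_le (hΦ : ContinuousOn Φ (Icc 0 1))
    {u : (Fin d → ℝ) → ℝ} (hu : ContDiff ℝ 1 u) (hsupp : Function.support u ⊆ unitCube d) {p : ℝ}
    (hp : 1 ≤ p) (hdp : d < p) (ht : t ∈ Icc 0 1) {ε : ℝ} (hε : 0 ≤ ε) :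
    |sliceFlux Φ i (u - dilationMean volume (Icc 0 1) u ε) t| ≤
      (1 - d / p)⁻¹ * ε ^ (1 - d / p) * (∫ y, ‖fderiv ℝ u y‖ ^ p) ^ p⁻¹ *
        ∫ y in Icc 0 1, ‖Φ (i.insertNth t y)‖ := by
  refine abs_sliceFlux_le_of_abs_le hΦ ht fun y hy => ?_
  simpa using norm_sub_dilationMean_le isCompact_Icc volume_Icc_zero_one hu
    (hasCompactSupport_of_support_subset_unitCube hsupp) hp (by simpa using hdp) hε
    fun z hz => norm_sub_le_one_of_mem_Icc hy hz

lemma abs_integral_mul_apply_le_of_dim_one {Φ : (Fin 1 → ℝ) → (Fin 1 → ℝ)}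
    (hΦ : ContinuousOn Φ (Icc 0 1)) {u : (Fin 1 → ℝ) → ℝ} (hu : ContDiff ℝ 1 u)
    (hsupp : Function.support u ⊆ unitCube 1) (i : Fin 1) :
    |∫ x in Icc 0 1, u x * Φ x i| ≤
      (∫ x in Icc 0 1, ‖Φ x‖) * ∫ x in Icc 0 1, ‖fderiv ℝ u x‖ := by
  have hint : IntegrableOn (fun x => ‖Φ x‖) (Icc 0 1) :=
    hΦ.norm.integrableOn_compact isCompact_Icc
  rw [mul_comm, ← integral_const_mul, ← Real.norm_eq_abs]
  refine norm_integral_le_of_norm_le (hint.const_mul _) (.of_forall fun x => ?_)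
  rw [norm_mul]
  gcongr
  exacts [norm_le_integral_norm_fderiv_of_dim_one hu hsupp x, norm_le_pi_norm _ i]

namespace IsSolenoidalOnBox

lemma abs_sliceFlux_dilationMean_le [NeZero d] (hΦ : IsSolenoidalOnBox 0 1 Φ)
    {u : (Fin d → ℝ) → ℝ} (hu : ContDiff ℝ 1 u) (hsupp : Function.support u ⊆ unitCube d) {p : ℝ}
    (hp : 1 ≤ p) (ht : t ∈ Icc 0 1) {ε : ℝ} (hε : 0 < ε) :
    |sliceFlux Φ i (dilationMean volume (Icc 0 1) u ε) t| ≤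
      2 * ((1 + ε) * (ε ^ (-(d / p)) * (∫ y, ‖fderiv ℝ u y‖ ^ p) ^ p⁻¹)) *
        ∫ x in Icc 0 1, ‖Φ x‖ := by
  have huc := hasCompactSupport_of_support_subset_unitCube hsupp
  have hψ : ContDiff ℝ 1 (dilationMean volume (Icc 0 1) u ε) :=
    contDiff_dilationMean isCompact_Icc hu huc
  have hψsupp : Function.support (dilationMean volume (Icc 0 1) u ε) ⊆ unitCube d :=
    support_dilationMean_subset convex_unitCube isOpen_unitCube closure_unitCube.ge hε.le hsupp
  have hgrad := norm_fderiv_dilationMean_le isCompact_Icc volume_Icc_zero_one hu huc hp hε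
  rw [Module.finrank_fin_fun] at hgrad
  rw [two_mul]
  exact hΦ.abs_sliceFlux_le hψ hψsupp
    (fun y _ => norm_le_of_norm_fderiv_le_of_support_subset hψ hψsupp hgrad y) hgrad ht

lemma abs_sliceFlux_le_mul_rpow [NeZero d] (hΦ : IsSolenoidalOnBox 0 1 Φ) {u : (Fin d → ℝ) → ℝ}
    (hu : ContDiff ℝ 1 u) (hsupp : Function.support u ⊆ unitCube d) {p : ℝ} (hdp : d < p)
    (ht : t ∈ Icc 0 1) :
    |sliceFlux Φ i u t| ≤ ((1 - d / p)⁻¹ + 4) * (∫ y, ‖fderiv ℝ u y‖ ^ p) ^ p⁻¹ *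
      ((∫ x in Icc 0 1, ‖Φ x‖) ^ (1 - d / p) *
        ((∫ y in Icc 0 1, ‖Φ (i.insertNth t y)‖) + ∫ x in Icc 0 1, ‖Φ x‖) ^ (d / p)) := by
  have hp : 1 ≤ p := (Nat.one_le_cast.2 (NeZero.one_le (n := d))).trans hdp.le
  set A := ∫ x in Icc 0 1, ‖Φ x‖
  set a := ∫ y in Icc 0 1, ‖Φ (i.insertNth t y)‖
  set S := (∫ y, ‖fderiv ℝ u y‖ ^ p) ^ p⁻¹
  have hA : 0 ≤ A := integral_nonneg fun _ => norm_nonneg _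
  have ha : 0 ≤ a := integral_nonneg fun _ => norm_nonneg _
  have hα : d / p < 1 := (div_lt_one (by linarith)).2 hdp
  rw [add_mul]
  refine le_mul_rpow_mul_rpow_of_forall_le hα hA (le_add_of_nonneg_left ha) fun ε hε => ?_
  have hψ : ContDiff ℝ 1 (dilationMean volume (Icc 0 1) u ε) := contDiff_dilationMean
    isCompact_Icc hu (hasCompactSupport_of_support_subset_unitCube hsupp)
  calc |sliceFlux Φ i u t|
    _ = |sliceFlux Φ i (u - dilationMean volume (Icc 0 1) u ε) t +
        sliceFlux Φ i (dilationMean volume (Icc 0 1) u ε) t| := by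
      rw [sliceFlux_sub hΦ.continuousOn ht hu.continuous hψ.continuous, sub_add_cancel]
    _ ≤ (1 - d / p)⁻¹ * ε ^ (1 - d / p) * S * a +
        2 * ((1 + ε) * (ε ^ (-(d / p)) * S)) * A :=
      (abs_add_le _ _).trans (add_le_add
        (abs_sliceFlux_sub_dilationMean_le hΦ.continuousOn hu hsupp hp hdp ht hε.1.le)
        (hΦ.abs_sliceFlux_dilationMean_le hu hsupp hp ht hε.1))
    _ ≤ (1 - d / p)⁻¹ * ε ^ (1 - d / p) * S * (a + A) +
        2 * ((1 + 1) * (ε ^ (-(d / p)) * S)) * A := by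
      have := hε.1
      have : 0 < 1 - d / p := sub_pos.2 hα
      gcongr
      exacts [le_add_of_nonneg_right hA, hε.2]
    _ = (1 - d / p)⁻¹ * S * ε ^ (1 - d / p) * (a + A) + 4 * S * ε ^ (-(d / p)) * A := by ring

lemma abs_sliceFlux_comp_insertNth_le [NeZero d] (hΦ : IsSolenoidalOnBox 0 1 Φ)
    {u : (Fin (d + 1) → ℝ) → ℝ} (hu : ContDiff ℝ 1 u)
    (hsupp : Function.support u ⊆ unitCube (d + 1)) {p : ℝ} (hdp : d < p) (ht : t ∈ Icc 0 1) :
    |sliceFlux Φ i (fun y => u (i.insertNth t y)) t| ≤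
      ((1 - d / p)⁻¹ + 4) * (∫ x in Icc 0 1, ‖Φ x‖) ^ (1 - d / p) *
        ((∫ y in Icc 0 1, ‖fderiv ℝ u (i.insertNth t y)‖ ^ p) ^ p⁻¹ *
          (∫ y in Icc 0 1, (‖Φ (i.insertNth t y)‖ + ∫ x in Icc 0 1, ‖Φ x‖)) ^ (d / p)) := by
  have hp : 0 < p := (Nat.cast_nonneg d).trans_lt hdp
  have hα : 0 < 1 - d / p := sub_pos.2 ((div_lt_one hp).2 hdp)
  have hint : IntegrableOn (fun y => ‖Φ (i.insertNth t y)‖) (Icc 0 1) :=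
    (continuousOn_comp_insertNth hΦ.continuousOn ht).norm.integrableOn_compact isCompact_Icc
  refine (hΦ.abs_sliceFlux_le_mul_rpow (hu.comp (contDiff_insertNth i t))
    (support_comp_insertNth_subset hsupp i t) hdp ht).trans ?_
  rw [setIntegral_Icc_zero_one_add_const hint, mul_assoc, mul_assoc, mul_left_comm (_ ^ p⁻¹)]
  gcongr
  exact integral_norm_fderiv_comp_insertNth_rpow_le hu hsupp i t hp

-- The exponent `d / p` is conjugate to `1 / p` exactly for `p = d + 1`.
lemma abs_integral_mul_apply_le_of_neZero [NeZero d] (hΦ : IsSolenoidalOnBox 0 1 Φ)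
    {u : (Fin (d + 1) → ℝ) → ℝ} (hu : ContDiff ℝ 1 u)
    (hsupp : Function.support u ⊆ unitCube (d + 1)) (i : Fin (d + 1)) {p : ℝ} (hp : p = d + 1) :
    |∫ x in Icc 0 1, u x * Φ x i| ≤ 2 * (p + 4) * (∫ x in Icc 0 1, ‖Φ x‖) *
      (∫ x in Icc 0 1, ‖fderiv ℝ u x‖ ^ p) ^ p⁻¹ := by
  have hdp : d < p := by linarith
  have hp0 : 0 < p := (Nat.cast_nonneg d).trans_lt hdp
  have hα : 1 - d / p = p⁻¹ := by
    field_simp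
    linarith
  have hα' : d / p + p⁻¹ = 1 := by linarith
  set A := ∫ x in Icc 0 1, ‖Φ x‖
  set G := ∫ x in Icc 0 1, ‖fderiv ℝ u x‖ ^ p
  have hA : 0 ≤ A := integral_nonneg fun _ => norm_nonneg _
  have huΦ : IntegrableOn (fun x => u x * Φ x i) (Icc 0 1) :=
    (hu.continuous.continuousOn.mul
      (continuousOn_pi.1 hΦ.continuousOn i)).integrableOn_compact isCompact_Icc
  have hmass : ∫ x in Icc 0 1, (‖Φ x‖ + A) = 2 * A := by
    rw [setIntegral_Icc_zero_one_add_const hΦ.integrableOn_norm, two_mul]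
  calc |∫ x in Icc 0 1, u x * Φ x i|
    _ ≤ (p + 4) * A ^ p⁻¹ * (G ^ p⁻¹ * (2 * A) ^ (d / p)) := by
      rw [← hmass]
      exact abs_setIntegral_Icc_le_of_forall_insertNth_le i huΦ
        (integrableOn_norm_fderiv_rpow hu hp0.le)
        (hΦ.integrableOn_norm.add (integrableOn_const (by simp [volume_Icc_zero_one])))
        (fun _ => by positivity) (fun _ => add_nonneg (norm_nonneg _) hA) (by positivity)
        (by positivity) (by linarith) (by positivity) fun t ht => by
          have := hΦ.abs_sliceFlux_comp_insertNth_le (i := i) hu hsupp hdp ht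
          rwa [hα, inv_inv] at this
    _ = (2 : ℝ) ^ (d / p) * (p + 4) * (A ^ (d / p) * A ^ p⁻¹) * G ^ p⁻¹ := by
      rw [Real.mul_rpow two_pos.le hA]
      ring
    _ = (2 : ℝ) ^ (d / p) * (p + 4) * A * G ^ p⁻¹ := by
      rw [← Real.rpow_add' hA (by simp [hα']), hα', Real.rpow_one]
    _ ≤ 2 * (p + 4) * A * G ^ p⁻¹ := by
      gcongr
      exact Real.rpow_le_self_of_one_le one_le_two ((div_le_one hp0).2 hdp.le)

lemma abs_integral_mul_apply_le (hΦ : IsSolenoidalOnBox 0 1 Φ)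
    {u : (Fin (d + 1) → ℝ) → ℝ} (hu : ContDiff ℝ 1 u)
    (hsupp : Function.support u ⊆ unitCube (d + 1)) (i : Fin (d + 1)) {p : ℝ} (hp : p = d + 1) :
    |∫ x in Icc 0 1, u x * Φ x i| ≤ 2 * (p + 4) * (∫ x in Icc 0 1, ‖Φ x‖) *
      (∫ x in Icc 0 1, ‖fderiv ℝ u x‖ ^ p) ^ p⁻¹ := by
  rcases eq_or_ne d 0 with rfl | hd
  · obtain rfl : p = 1 := by simpa using hp
    have hA : 0 ≤ ∫ x in Icc 0 1, ‖Φ x‖ := integral_nonneg fun _ => norm_nonneg _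
    have hG : 0 ≤ ∫ x in Icc 0 1, ‖fderiv ℝ u x‖ := integral_nonneg fun _ => norm_nonneg _
    have := abs_integral_mul_apply_le_of_dim_one hΦ.continuousOn hu hsupp i
    simp only [Real.rpow_one, inv_one]
    nlinarith [mul_nonneg hA hG]
  · have : NeZero d := ⟨hd⟩
    exact hΦ.abs_integral_mul_apply_le_of_neZero hu hsupp i hp

end IsSolenoidalOnBox

end ComponentEstimate

section Jacobian

variable {n : ℕ} {φ : (Fin n → ℝ) → (Fin n → ℝ)}

lemma continuous_jacn (hφ : ContDiff ℝ 1 φ) : Continuous (jacn φ) :=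
  continuous_pi fun i => continuous_pi fun _ =>
    ((contDiff_pi.1 hφ i).continuous_fderiv one_ne_zero).clm_apply continuous_const

lemma norm_fderiv_apply_le_norm_jacn (i : Fin n) (x : Fin n → ℝ) :
    ‖fderiv ℝ (fun y => φ y i) x‖ ≤ n * ‖jacn φ x‖ := by
  refine ContinuousLinearMap.opNorm_le_bound _ (by positivity) fun v => ?_
  calc ‖fderiv ℝ (fun y => φ y i) x v‖
    _ = ‖∑ j, v j • jacn φ x i j‖ := by
      conv_lhs => rw [pi_eq_sum_univ' v, map_sum]
      simp [jacn, pdn]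
    _ ≤ ∑ _j : Fin n, ‖v‖ * ‖jacn φ x‖ := by
      refine norm_sum_le_of_le _ fun j _ => ?_
      rw [norm_smul]
      gcongr
      exacts [norm_le_pi_norm v j,
        (norm_le_pi_norm (jacn φ x i) j).trans (norm_le_pi_norm (jacn φ x) i)]
    _ = n * ‖jacn φ x‖ * ‖v‖ := by
      simp
      ring

lemma integral_norm_fderiv_apply_rpow_le (hφ : ContDiff ℝ 1 φ) (i : Fin n) {p : ℝ} (hp : 0 < p) :
    (∫ x in Icc 0 1, ‖fderiv ℝ (fun y => φ y i) x‖ ^ p) ^ p⁻¹ ≤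
      n * (∫ x in Icc 0 1, ‖jacn φ x‖ ^ p) ^ p⁻¹ := by
  have hjac : IntegrableOn (fun x => ‖jacn φ x‖ ^ p) (Icc 0 1) :=
    ((continuous_jacn hφ).norm.rpow_const fun _ => .inr hp.le).integrableOn_Icc
  calc (∫ x in Icc 0 1, ‖fderiv ℝ (fun y => φ y i) x‖ ^ p) ^ p⁻¹
    _ ≤ (∫ x in Icc 0 1, (n : ℝ) ^ p * ‖jacn φ x‖ ^ p) ^ p⁻¹ := by
      gcongr (?_) ^ p⁻¹
      refine setIntegral_mono (integrableOn_norm_fderiv_rpow (contDiff_pi.1 hφ i) hp.le)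
        (hjac.const_mul _) fun x => ?_
      rw [← Real.mul_rpow (by positivity) (norm_nonneg _)]
      gcongr
      exact norm_fderiv_apply_le_norm_jacn i x
    _ = n * (∫ x in Icc 0 1, ‖jacn φ x‖ ^ p) ^ p⁻¹ := by
      rw [integral_const_mul, Real.mul_rpow (by positivity) (by positivity),
        Real.rpow_rpow_inv (by positivity) hp.ne']

end Jacobian

namespace IsSolenoidalOnBox

variable {n : ℕ} {Φ φ : (Fin n → ℝ) → (Fin n → ℝ)}

lemma of_unitCube (hΦc : ContinuousOn Φ (closure (unitCube n)))
    (hΦd : DifferentiableOn ℝ Φ (unitCube n))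
    (hdiv : ∀ x ∈ unitCube n, ∑ j, pdn j (fun y => Φ y j) x = 0) : IsSolenoidalOnBox 0 1 Φ := by
  rw [closure_unitCube] at hΦc
  rw [unitCube_eq_pi] at hΦd hdiv
  exact ⟨hΦc, fun x hx => hΦd.differentiableAt
    ((isOpen_set_pi finite_univ fun _ _ => isOpen_Ioo).mem_nhds hx), hdiv⟩

lemma integral_sum_mul_le [NeZero n] (hΦ : IsSolenoidalOnBox 0 1 Φ) (hφ : ContDiff ℝ 1 φ)
    (hsupp : Function.support φ ⊆ unitCube n) :
    ∫ x in Icc 0 1, ∑ j, Φ x j * φ x j ≤ 2 * n ^ 2 * (n + 4) * (∫ x in Icc 0 1, ‖Φ x‖) *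
      (∫ x in Icc 0 1, ‖jacn φ x‖ ^ (n : ℝ)) ^ (n : ℝ)⁻¹ := by
  obtain ⟨d, rfl⟩ := Nat.exists_eq_add_one_of_ne_zero (NeZero.ne n)
  set p : ℝ := ↑(d + 1)
  have hint (j : Fin (d + 1)) : IntegrableOn (fun x => Φ x j * φ x j) (Icc 0 1) :=
    ((continuousOn_pi.1 hΦ.continuousOn j).mul
      (contDiff_pi.1 hφ j).continuous.continuousOn).integrableOn_compact isCompact_Icc
  rw [integral_finsetSum _ fun j _ => hint j]
  calc ∑ j, ∫ x in Icc 0 1, Φ x j * φ x j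
    _ ≤ ∑ _j : Fin (d + 1), 2 * (p + 4) * (∫ x in Icc 0 1, ‖Φ x‖) *
        (p * (∫ x in Icc 0 1, ‖jacn φ x‖ ^ p) ^ p⁻¹) := by
      refine Finset.sum_le_sum fun j _ => ?_
      refine (le_abs_self _).trans ?_
      simp only [mul_comm (Φ _ _)]
      refine (hΦ.abs_integral_mul_apply_le (contDiff_pi.1 hφ j)
        (fun x hx => hsupp fun h => hx (congrFun h j)) j (Nat.cast_succ d)).trans ?_
      gcongr
      exact integral_norm_fderiv_apply_rpow_le hφ j (by positivity)
    _ = 2 * p ^ 2 * (p + 4) * (∫ x in Icc 0 1, ‖Φ x‖) *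
        (∫ x in Icc 0 1, ‖jacn φ x‖ ^ p) ^ p⁻¹ := by
      rw [Finset.sum_const, Finset.card_univ, Fintype.card_fin, nsmul_eq_mul]
      ring

end IsSolenoidalOnBox

theorem localized_bourgain_brezis_general (n : ℕ) (hn : 0 < n) :
    ∃ c : ℝ, 0 < c ∧
      ∀ Φ : (Fin n → ℝ) → (Fin n → ℝ),
        ContinuousOn Φ (closure (unitCube n)) → DifferentiableOn ℝ Φ (unitCube n) →
        (∀ x ∈ unitCube n, ∑ j, pdn j (fun y => Φ y j) x = 0) →
        ∀ φ : (Fin n → ℝ) → (Fin n → ℝ), ContDiff ℝ 1 φ → Function.support φ ⊆ unitCube n →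
            ∫ x in unitCube n, (∑ j, Φ x j * φ x j) ≤
              c * (eLpNorm Φ 1 (volume.restrict (unitCube n))).toReal *
                (eLpNorm (fun x => jacn φ x) (n : ℝ≥0∞)
                  (volume.restrict (unitCube n))).toReal := by
  have : NeZero n := ⟨hn.ne'⟩
  refine ⟨2 * n ^ 2 * (n + 4), by positivity, fun Φ hΦc hΦd hdiv φ hφ hsupp => ?_⟩
  have hΦ := IsSolenoidalOnBox.of_unitCube hΦc hΦd hdiv
  have hΦm : AEStronglyMeasurable Φ (volume.restrict (Icc 0 1)) :=
    hΦ.continuousOn.aestronglyMeasurable measurableSet_Icc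
  have hφm : AEStronglyMeasurable (fun x => jacn φ x) (volume.restrict (Icc 0 1)) :=
    (continuous_jacn hφ).aestronglyMeasurable
  rw [restrict_unitCube, toReal_eLpNorm hΦm, toReal_eLpNorm hφm, lpNorm_one_eq_integral_norm hΦm,
    lpNorm_eq_integral_norm_rpow_toReal (by simpa using hn.ne') (ENNReal.natCast_ne_top n) hφm,
    ENNReal.toReal_natCast]
  exact hΦ.integral_sum_mul_le hφ hsupp

/-- Localized Bourgain–Brezis estimate: there is `c = c(n) > 0` such that for every
divergence-free `Φ ∈ C(closure (0,1)ⁿ; ℝⁿ) ∩ C¹((0,1)ⁿ; ℝⁿ)` and every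
`φ ∈ C_c^∞((0,1)ⁿ; ℝⁿ)` one has
`∫_{(0,1)ⁿ} ⟨Φ, φ⟩ ≤ c ‖Φ‖_{L¹((0,1)ⁿ)} ‖∇φ‖_{Lⁿ((0,1)ⁿ)}`. -/
theorem localized_bourgain_brezis (n : ℕ) (hn : 0 < n) :
    ∃ c : ℝ, 0 < c ∧
      ∀ Φ : (Fin n → ℝ) → (Fin n → ℝ),
        ContinuousOn Φ (closure (unitCube n)) → ContDiffOn ℝ 1 Φ (unitCube n) →
        (∀ x ∈ unitCube n, ∑ j, pdn j (fun y => Φ y j) x = 0) →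
        ∀ φ : (Fin n → ℝ) → (Fin n → ℝ), ContDiff ℝ (⊤ : ℕ∞) φ → HasCompactSupport φ →
          tsupport φ ⊆ unitCube n →
            ∫ x in unitCube n, (∑ j, Φ x j * φ x j) ≤
              c * (eLpNorm Φ 1 (volume.restrict (unitCube n))).toReal *
                (eLpNorm (fun x => jacn φ x) (n : ℝ≥0∞)
                  (volume.restrict (unitCube n))).toReal := by
  obtain ⟨c, hc, h⟩ := localized_bourgain_brezis_general n hn
  exact ⟨c, hc, fun Φ hΦc hΦ hdiv φ hφ _ hsupp => h Φ hΦc (hΦ.differentiableOn one_ne_zero) hdiv φ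
    (hφ.of_le (mod_cast le_top)) (subset_closure.trans hsupp)⟩
end
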